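/- arXiv:2603.21603 — 6 statements merged into one kernel-verified Lean document; each statement's English description precedes it below -/
import Mathlib

section
/- Let I = [x0, x1] be a compact interval with x0 < x1, let D ⊆ ℝ³, and fix positive reals ε_y, ε̂_y, ε_z and integers n > k > 1. Let α(t) = (t, p_y(t), p_z(t)) be a graph curve over I, set δ(k,n) = 2(n−k)/((n−1)(x1−x0)) and ε̂_z = δ(k,n)·ε_z. For i = 1, …, n define the translated graph curves α_i(t) = (t, p_y(t), p_z(t) + c_i), where c_i = −ε_z(k−1) + 2ε_z(k−1)(i−1)/(n−1). Then the big u-tube equals the union of the small u-tubes: U(α, ε_y, ε̂_y, k·ε_z, ε̂_z) = ⋃_{i=1}^{n} U(α_i, ε_y, ε̂_y, ε_z, ε̂_z). -/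
/-!
For `γ` in the big tube, let `g = γ_z - p_z`. Since `|g'| ≤ εz'`, on an interval of length
`ℓ = x1 - x0` its values lie in `[m, m + εz' * ℓ]`, where `m` is its minimum. Consecutive offsets
differ by `2 * εz * (k - 1) / (n - 1)`, so consecutive intervals `[c i - εz, c i + εz]` overlap in
length `2 * εz * (n - k) / (n - 1) = εz' * ℓ`, and together they cover `[-k * εz, k * εz]`. Hence
the last of these intervals which starts at or below `m` contains every value of `g`.
-/

open Set

/-- The u-tube around the graph curve `t ↦ (t, py t, pz t)` over `I`, with image in `D`.
A graph curve is represented by its pair of coordinate functions `(γ_y, γ_z)`. -/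
def uTube (D : Set (ℝ × ℝ × ℝ)) (I : Set ℝ) (py pz : ℝ → ℝ)
    (εy εy' εz εz' : ℝ) : Set ((ℝ → ℝ) × (ℝ → ℝ)) :=
  {γ | ContDiffOn ℝ 1 γ.1 I ∧ ContDiffOn ℝ 1 γ.2 I ∧
      (∀ t ∈ I, (t, γ.1 t, γ.2 t) ∈ D) ∧
      (∀ t ∈ I, |γ.1 t - py t| ≤ εy) ∧
      (∀ t ∈ I, |derivWithin γ.1 I t - derivWithin py I t| ≤ εy') ∧
      (∀ t ∈ I, |γ.2 t - pz t| ≤ εz) ∧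
      (∀ t ∈ I, |derivWithin γ.2 I t - derivWithin pz I t| ≤ εz')}

lemma exists_Icc_inter_Iic_subset_Icc {α : Type*} [LinearOrder α] {a b : ℕ → α} {m M : α}
    {p n : ℕ} (hpn : p ≤ n) (hm : a p ≤ m)
    (hoverlap : ∀ i ∈ Finset.Ico p n, m < a (i + 1) → M ≤ b i) :
    ∃ i ∈ Finset.Icc p n, Icc m M ∩ Iic (b n) ⊆ Icc (a i) (b i) := by
  let i := Nat.findGreatest (fun j => a j ≤ m) n
  have hai : a i ≤ m := Nat.findGreatest_spec (P := fun j => a j ≤ m) hpn hm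
  have hpi : p ≤ i := Nat.le_findGreatest hpn hm
  have hin : i ≤ n := Nat.findGreatest_le n
  refine ⟨i, Finset.mem_Icc.2 ⟨hpi, hin⟩, fun v ⟨⟨hmv, hvM⟩, hvn⟩ => ⟨hai.trans hmv, ?_⟩⟩
  rcases hin.eq_or_lt with heq | hlt
  · rwa [heq]
  · have hnext : m < a (i + 1) :=
      not_le.1 (Nat.findGreatest_is_greatest (P := fun j => a j ≤ m) i.lt_succ_self hlt)
    exact hvM.trans (hoverlap i (Finset.mem_Ico.2 ⟨hpi, hlt⟩) hnext)

lemma norm_sub_le_mul_of_norm_derivWithin_Icc_le {E : Type*} [NormedAddCommGroup E]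
    [NormedSpace ℝ E] {f : ℝ → E} {a b C : ℝ} (hf : DifferentiableOn ℝ f (Icc a b))
    (hC : ∀ t ∈ Icc a b, ‖derivWithin f (Icc a b) t‖ ≤ C) {s t : ℝ}
    (hs : s ∈ Icc a b) (ht : t ∈ Icc a b) : ‖f t - f s‖ ≤ C * (b - a) :=
  calc ‖f t - f s‖ ≤ C * ‖t - s‖ :=
        (convex_Icc a b).norm_image_sub_le_of_norm_derivWithin_le hf hC hs ht
    _ ≤ C * (b - a) :=
        mul_le_mul_of_nonneg_left (Real.dist_le_of_mem_Icc ht hs) ((norm_nonneg _).trans (hC s hs))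

lemma exists_image_Icc_subset_Icc_add_of_abs_derivWithin_le {f : ℝ → ℝ} {a b C : ℝ} (hab : a ≤ b)
    (hf : DifferentiableOn ℝ f (Icc a b)) (hC : ∀ t ∈ Icc a b, |derivWithin f (Icc a b) t| ≤ C) :
    ∃ s ∈ Icc a b, f '' Icc a b ⊆ Icc (f s) (f s + C * (b - a)) := by
  obtain ⟨s, hs, hmin⟩ := isCompact_Icc.exists_isMinOn (nonempty_Icc.2 hab) hf.continuousOn
  refine ⟨s, hs, image_subset_iff.2 fun t ht => ⟨hmin ht, ?_⟩⟩
  exact sub_le_iff_le_add'.1 <|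
    (le_abs_self _).trans (norm_sub_le_mul_of_norm_derivWithin_Icc_le hf hC hs ht)

section Tube

variable {D : Set (ℝ × ℝ × ℝ)} {py pz : ℝ → ℝ} {εy εy' ε ε' R : ℝ}

lemma uTube_add_const_subset {I : Set ℝ} {d : ℝ} (hd : |d| + ε ≤ R) :
    uTube D I py (fun t => pz t + d) εy εy' ε ε' ⊆ uTube D I py pz εy εy' R ε' := by
  rintro γ ⟨hγy, hγz, hD, hy, hy', hz, hz'⟩
  refine ⟨hγy, hγz, hD, hy, hy', fun t ht => ?_, by simpa only [derivWithin_add_const] using hz'⟩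
  calc |γ.2 t - pz t| = |γ.2 t - (pz t + d) + d| := by ring_nf
    _ ≤ |γ.2 t - (pz t + d)| + |d| := abs_add_le _ _
    _ ≤ R := by linarith [hz t ht]

variable {a b : ℝ} {n : ℕ} {c : ℕ → ℝ}

lemma uTube_subset_iUnion_uTube_add_const (hab : a ≤ b) (hpz : DifferentiableOn ℝ pz (Icc a b))
    (hn : 1 ≤ n) (hfirst : c 1 ≤ ε - R) (hlast : R - ε ≤ c n)
    (hgap : ∀ i ∈ Finset.Ico 1 n, c (i + 1) - c i ≤ 2 * ε - ε' * (b - a)) :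
    uTube D (Icc a b) py pz εy εy' R ε' ⊆
      ⋃ i ∈ Finset.Icc 1 n, uTube D (Icc a b) py (fun t => pz t + c i) εy εy' ε ε' := by
  rintro γ ⟨hγy, hγz, hD, hy, hy', hz, hz'⟩
  have hγd := hγz.differentiableOn one_ne_zero
  obtain ⟨s, hs, hrange⟩ := exists_image_Icc_subset_Icc_add_of_abs_derivWithin_le hab
    (hγd.sub hpz) fun t ht => by
      rw [derivWithin_sub (hγd t ht) (hpz t ht)]
      exact hz' t ht
  obtain ⟨i, hi, hcover⟩ := exists_Icc_inter_Iic_subset_Icc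
    (a := fun i => c i - ε) (b := fun i => c i + ε) (m := (γ.2 - pz) s)
    (M := (γ.2 - pz) s + ε' * (b - a)) hn
    (by
      rw [Pi.sub_apply]
      linarith [(abs_le.1 (hz s hs)).1])
    (fun i hi hlt => by linarith [hgap i hi])
  refine mem_iUnion₂.2 ⟨i, hi, hγy, hγz, hD, hy, hy', fun t ht => ?_,
    by simpa only [derivWithin_add_const] using hz'⟩
  have hbelow : (γ.2 - pz) t ≤ c n + ε := by
    rw [Pi.sub_apply]
    linarith [(abs_le.1 (hz t ht)).2]
  rw [← sub_sub, abs_sub_comm]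
  exact mem_Icc_iff_abs_le.2 (hcover ⟨hrange (mem_image_of_mem _ ht), hbelow⟩)

theorem uTube_eq_iUnion_uTube_add_const (hab : a ≤ b) (hpz : DifferentiableOn ℝ pz (Icc a b))
    (hn : 1 ≤ n) (hfirst : c 1 = ε - R) (hlast : c n = R - ε)
    (hgap : ∀ i ∈ Finset.Ico 1 n, c (i + 1) - c i ≤ 2 * ε - ε' * (b - a))
    (hradius : ∀ i ∈ Finset.Icc 1 n, |c i| + ε ≤ R) :
    uTube D (Icc a b) py pz εy εy' R ε' =
      ⋃ i ∈ Finset.Icc 1 n, uTube D (Icc a b) py (fun t => pz t + c i) εy εy' ε ε' :=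
  (uTube_subset_iUnion_uTube_add_const hab hpz hn hfirst.le hlast.ge hgap).antisymm <|
    iUnion₂_subset fun i hi => uTube_add_const_subset (hradius i hi)

end Tube

/-- The `i`-th vertical offset `c_i`, for `i = 1, …, n`, of the tubes of radius `ε` into which the
tube of radius `k * ε` is cut. The offsets are numbered from `1`, and `n = 1` divides by zero. -/
noncomputable def tubeOffset (ε k : ℝ) (n i : ℕ) : ℝ :=
  -ε * (k - 1) + 2 * ε * (k - 1) * ((i : ℝ) - 1) / ((n : ℝ) - 1)

section Offset

variable {ε k : ℝ} {n : ℕ}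

lemma tubeOffset_one (ε k : ℝ) (n : ℕ) : tubeOffset ε k n 1 = -(ε * (k - 1)) := by
  simp [tubeOffset]

lemma tubeOffset_self (ε k : ℝ) (hn : 1 < n) : tubeOffset ε k n n = ε * (k - 1) := by
  have hn' : (n : ℝ) - 1 ≠ 0 := sub_ne_zero.2 (Nat.cast_ne_one.2 hn.ne')
  rw [tubeOffset, mul_div_cancel_right₀ _ hn']
  ring

lemma tubeOffset_succ_sub (ε k : ℝ) (n i : ℕ) :
    tubeOffset ε k n (i + 1) - tubeOffset ε k n i = 2 * ε * (k - 1) / ((n : ℝ) - 1) := by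
  simp only [tubeOffset, Nat.cast_add_one]
  ring

lemma monotone_tubeOffset (hε : 0 ≤ ε) (hk : 1 ≤ k) (hn : 1 ≤ n) : Monotone (tubeOffset ε k n) := by
  refine monotone_nat_of_le_succ fun i => sub_nonneg.1 ?_
  rw [tubeOffset_succ_sub]
  exact div_nonneg (mul_nonneg (mul_nonneg zero_le_two hε) (sub_nonneg.2 hk))
    (sub_nonneg.2 (Nat.one_le_cast.2 hn))

lemma abs_tubeOffset_le (hε : 0 ≤ ε) (hk : 1 ≤ k) (hn : 1 < n) {i : ℕ} (hi : i ∈ Finset.Icc 1 n) :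
    |tubeOffset ε k n i| ≤ ε * (k - 1) := by
  obtain ⟨h1i, hin⟩ := Finset.mem_Icc.1 hi
  have hmono := monotone_tubeOffset hε hk hn.le
  exact abs_le.2 ⟨(tubeOffset_one ε k n).ge.trans (hmono h1i),
    (hmono hin).trans (tubeOffset_self ε k hn).le⟩

end Offset

theorem stmt0_general {x0 x1 : ℝ} (hx : x0 < x1) (D : Set (ℝ × ℝ × ℝ)) (εy εy' : ℝ) {εz : ℝ}
    (hεz : 0 ≤ εz) {n : ℕ} (hn : 1 < n) {k : ℝ} (hk : 1 ≤ k) (py : ℝ → ℝ) {pz : ℝ → ℝ}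
    (hpz : DifferentiableOn ℝ pz (Icc x0 x1)) {εz' : ℝ}
    (hεz' : εz' ≤ 2 * ((n : ℝ) - k) / (((n : ℝ) - 1) * (x1 - x0)) * εz) :
    uTube D (Icc x0 x1) py pz εy εy' (k * εz) εz' =
      ⋃ i ∈ Finset.Icc 1 n,
        uTube D (Icc x0 x1) py (fun t => pz t + tubeOffset εz k n i) εy εy' εz εz' := by
  have hlen : 0 < x1 - x0 := sub_pos.2 hx
  have hn' : 0 < (n : ℝ) - 1 := sub_pos.2 (Nat.one_lt_cast.2 hn)
  have hgap (i : ℕ) :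
      tubeOffset εz k n (i + 1) - tubeOffset εz k n i ≤ 2 * εz - εz' * (x1 - x0) :=
    calc tubeOffset εz k n (i + 1) - tubeOffset εz k n i
        = 2 * εz - 2 * ((n : ℝ) - k) / (((n : ℝ) - 1) * (x1 - x0)) * εz * (x1 - x0) := by
          rw [tubeOffset_succ_sub]
          field_simp
          ring
      _ ≤ 2 * εz - εz' * (x1 - x0) := by gcongr
  refine uTube_eq_iUnion_uTube_add_const hx.le hpz hn.le ?_ ?_ (fun i _ => hgap i) fun i hi => ?_
  · rw [tubeOffset_one]
    ring
  · rw [tubeOffset_self _ _ hn]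
    ring
  · linarith [abs_tubeOffset_le hεz hk hn hi]

/-- The big u-tube equals the union of the `n` translated small u-tubes. -/
theorem stmt0 (x0 x1 : ℝ) (hx : x0 < x1) (D : Set (ℝ × ℝ × ℝ))
    (εy εy' εz : ℝ) (hεy : 0 < εy) (hεy' : 0 < εy') (hεz : 0 < εz)
    (n k : ℕ) (hk : 1 < k) (hkn : k < n)
    (py pz : ℝ → ℝ)
    (hpy : ContDiffOn ℝ 1 py (Icc x0 x1)) (hpz : ContDiffOn ℝ 1 pz (Icc x0 x1))
    (εz' : ℝ)
    (hεz' : εz' = 2 * ((n : ℝ) - (k : ℝ)) / (((n : ℝ) - 1) * (x1 - x0)) * εz)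
    (c : ℕ → ℝ)
    (hc : ∀ i : ℕ, c i = -εz * ((k : ℝ) - 1)
        + 2 * εz * ((k : ℝ) - 1) * ((i : ℝ) - 1) / ((n : ℝ) - 1)) :
    uTube D (Icc x0 x1) py pz εy εy' ((k : ℝ) * εz) εz' =
      ⋃ i ∈ Finset.Icc 1 n,
        uTube D (Icc x0 x1) py (fun t => pz t + c i) εy εy' εz εz' := by
  obtain rfl : c = tubeOffset εz k n := funext hc
  exact stmt0_general hx D εy εy' hεz.le (hk.trans hkn) (Nat.one_le_cast.2 hk.le) py
    (hpz.differentiableOn one_ne_zero) hεz'.le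
end

section
/- Let I = [a, b] with a < b and put L = b − a. Let n > k > 1 be integers, let ε > 0, and set ε̂ = 2(n−k)ε/((n−1)L). For i = 1, …, n define c_i = −(k−1)ε + 2(k−1)ε(i−1)/(n−1). If g : I → ℝ is differentiable with |g(t)| ≤ k·ε and |g'(t)| ≤ ε̂ for all t ∈ I, then there exists an index i ∈ {1, …, n} such that |g(t) − c_i| ≤ ε for all t ∈ I. -/
open Set

/-!
Take the last band whose lower end still lies below all values of `g`. If it is not the top band,
then some value lies below the lower end of the next one, so every value exceeds that end by at most
the oscillation. As the oscillation is at most the overlap of consecutive bands, no value leaves the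
chosen band through its upper end. Only the oscillation of `g` matters; the bound on the derivative
enters through the mean value inequality.
-/

theorem exists_subset_Icc_of_sub_le {G : Type*} [AddCommGroup G] [LinearOrder G]
    [IsOrderedAddMonoid G] {s : Set G} {l u : ℕ → G} {m n : ℕ} (hmn : m ≤ n)
    (hl : l m ∈ lowerBounds s) (hu : u n ∈ upperBounds s)
    (hosc : ∀ i ∈ Finset.Ico m n, ∀ x ∈ s, ∀ y ∈ s, y - x ≤ u i - l (i + 1)) :
    ∃ i ∈ Finset.Icc m n, s ⊆ Icc (l i) (u i) := by
  induction n, hmn using Nat.le_induction with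
  | base => exact ⟨m, Finset.left_mem_Icc.2 le_rfl, fun x hx => ⟨hl hx, hu hx⟩⟩
  | succ n hmn ih =>
    by_cases hlast : l (n + 1) ∈ lowerBounds s
    · exact ⟨n + 1, Finset.right_mem_Icc.2 (by lia), fun x hx => ⟨hlast hx, hu hx⟩⟩
    · obtain ⟨x, hx, hxl⟩ : ∃ x ∈ s, x < l (n + 1) := by
        simpa only [mem_lowerBounds, not_forall, not_le, exists_prop] using hlast
      have hun : u n ∈ upperBounds s := fun y hy =>
        calc y ≤ u n - l (n + 1) + x :=
              sub_le_iff_le_add.1 (hosc n (Finset.mem_Ico.2 ⟨hmn, n.lt_succ_self⟩) x hx y hy)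
          _ ≤ u n - l (n + 1) + l (n + 1) := by gcongr
          _ = u n := sub_add_cancel _ _
      obtain ⟨i, hi, hsi⟩ := ih hun fun i hi =>
        hosc i (Finset.Ico_subset_Ico_right n.le_succ hi)
      exact ⟨i, Finset.Icc_subset_Icc_right n.le_succ hi, hsi⟩

section Bands

variable {K : Type*} [Field K]

/-- The centre `c i` of the `i`-th of `n` equally spaced bands of half-width `ε` covering
`[-(k * ε), k * ε]`. The bands are numbered from `1` to `n`, and `n = 1` is degenerate: the spacing
is then a division by zero. -/
def bandCenter (n : ℕ) (k ε : K) (i : ℕ) : K :=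
  -(k - 1) * ε + 2 * (k - 1) * ε * ((i : K) - 1) / ((n : K) - 1)

theorem bandCenter_one_sub (n : ℕ) (k ε : K) : bandCenter n k ε 1 - ε = -(k * ε) := by
  simp only [bandCenter, Nat.cast_one, sub_self, mul_zero, zero_div]
  ring

theorem bandCenter_self_add {n : ℕ} (hn : (n : K) - 1 ≠ 0) (k ε : K) :
    bandCenter n k ε n + ε = k * ε := by
  rw [bandCenter, mul_div_cancel_right₀ _ hn]
  ring

theorem bandCenter_overlap {n : ℕ} (hn : (n : K) - 1 ≠ 0) (k ε : K) (i : ℕ) :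
    bandCenter n k ε i + ε - (bandCenter n k ε (i + 1) - ε) = 2 * (n - k) * ε / (n - 1) := by
  simp only [bandCenter, Nat.cast_succ]
  field_simp
  ring

theorem stmt1_general [LinearOrder K] [IsStrictOrderedRing K] {X : Type*} {S : Set X} {g : X → K}
    {n : ℕ} (hn : 1 < n) {k ε : K} (hgb : ∀ t ∈ S, |g t| ≤ k * ε)
    (hosc : ∀ s ∈ S, ∀ t ∈ S, |g t - g s| ≤ 2 * (n - k) * ε / (n - 1)) :
    ∃ i ∈ Finset.Icc 1 n, ∀ t ∈ S, |g t - bandCenter n k ε i| ≤ ε := by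
  have hn' : (n : K) - 1 ≠ 0 := sub_ne_zero.2 (Nat.cast_ne_one.2 hn.ne')
  obtain ⟨i, hi, hband⟩ := exists_subset_Icc_of_sub_le (s := g '' S)
    (l := fun i => bandCenter n k ε i - ε) (u := fun i => bandCenter n k ε i + ε) hn.le
    (forall_mem_image.2 fun t ht => by
      simpa only [bandCenter_one_sub] using (abs_le.1 (hgb t ht)).1)
    (forall_mem_image.2 fun t ht => by
      simpa only [bandCenter_self_add hn'] using (abs_le.1 (hgb t ht)).2)
    (fun i _ => forall_mem_image.2 fun s hs => forall_mem_image.2 fun t ht => by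
      simpa only [bandCenter_overlap hn'] using le_of_abs_le (hosc s hs t ht))
  exact ⟨i, hi, fun t ht => abs_sub_le_iff.2
    ⟨sub_le_iff_le_add'.2 (hband (mem_image_of_mem g ht)).2,
      sub_le_comm.1 (hband (mem_image_of_mem g ht)).1⟩⟩

end Bands

theorem norm_sub_le_of_norm_derivWithin_le_div {E : Type*} [NormedAddCommGroup E]
    [NormedSpace ℝ E] {a b C : ℝ} (hab : a < b) {g : ℝ → E} (hg : DifferentiableOn ℝ g (Icc a b))
    (hgd : ∀ t ∈ Icc a b, ‖derivWithin g (Icc a b) t‖ ≤ C / (b - a))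
    {s t : ℝ} (hs : s ∈ Icc a b) (ht : t ∈ Icc a b) : ‖g t - g s‖ ≤ C := by
  have hslope : 0 ≤ C / (b - a) := (norm_nonneg _).trans (hgd s hs)
  calc ‖g t - g s‖ ≤ C / (b - a) * ‖t - s‖ :=
        (convex_Icc a b).norm_image_sub_le_of_norm_derivWithin_le hg hgd hs ht
    _ ≤ C / (b - a) * (b - a) :=
        mul_le_mul_of_nonneg_left (Real.dist_le_of_mem_Icc ht hs) hslope
    _ = C := div_mul_cancel₀ C (sub_pos.2 hab).ne'

/-- The core covering estimate behind the splitting of a big u-tube into small u-tubes: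
a differentiable function on `[a, b]` bounded by `k·ε` whose derivative is bounded by
`ε̂ = 2(n−k)ε/((n−1)(b−a))` lies within distance `ε` of one of the constants `c i`. -/
theorem stmt1 (a b : ℝ) (hab : a < b) (n k : ℕ) (hk : 1 < k) (hkn : k < n)
    (ε : ℝ) (hε : 0 < ε) (εhat : ℝ)
    (hεhat : εhat = 2 * ((n : ℝ) - (k : ℝ)) * ε / (((n : ℝ) - 1) * (b - a)))
    (c : ℕ → ℝ)
    (hc : ∀ i : ℕ, c i = -((k : ℝ) - 1) * ε
        + 2 * ((k : ℝ) - 1) * ε * ((i : ℝ) - 1) / ((n : ℝ) - 1))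
    (g : ℝ → ℝ) (hg : DifferentiableOn ℝ g (Icc a b))
    (hgb : ∀ t ∈ Icc a b, |g t| ≤ (k : ℝ) * ε)
    (hgd : ∀ t ∈ Icc a b, |derivWithin g (Icc a b) t| ≤ εhat) :
    ∃ i ∈ Finset.Icc 1 n, ∀ t ∈ Icc a b, |g t - c i| ≤ ε := by
  obtain rfl : c = bandCenter n (k : ℝ) ε := funext hc
  rw [← div_div] at hεhat
  exact stmt1_general (hk.trans hkn) hgb fun s hs t ht =>
    norm_sub_le_of_norm_derivWithin_le_div hab hg (hεhat ▸ hgd) hs ht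
end

section
/- Let I = [x0, x1] be a compact interval with x0 < x1, let Ω be a family of graph curves over I, let f : ℝ³ → ℝ³ be C¹, let α be a graph curve over I, and let s : I → I be C¹ with s(I) ⊆ (x0, x1). Assume that f∘α∘s is a graph curve over I lying in the C¹-interior of Ω. Then there exist ε > 0 and a compact set K ⊂ ℝ³ such that: for every C¹ map g : ℝ³ → ℝ³ satisfying sup_{p∈K}(|g(p) − f(p)| + ‖Dg(p) − Df(p)‖) < ε, and every C¹ curve γ : I → ℝ³ satisfying sup_{t∈I}(|γ(t) − α(t)| + |γ'(t) − α'(t)|) < ε, there exists a C¹ function r : I → I with r(I) ⊆ (x0, x1) such that g∘γ∘r is a graph curve over I lying in the C¹-interior of Ω. -/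
open Set

/-- A graph curve over `I`: a `C¹` map `γ : I → ℝ³` of the form `γ t = (t, γ_y t, γ_z t)`. -/
def IsGraphCurve (I : Set ℝ) (γ : ℝ → ℝ × ℝ × ℝ) : Prop :=
  ContDiffOn ℝ 1 γ I ∧ ∀ t ∈ I, (γ t).1 = t

/-- The `C¹`-distance between two curves over `I`: sum of the sup of the `C⁰` distance
and the sup of the distance between derivatives. -/
noncomputable def C1dist (I : Set ℝ) (γ δ : ℝ → ℝ × ℝ × ℝ) : ℝ :=
  (⨆ t : I, ‖γ (t : ℝ) - δ (t : ℝ)‖) +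
    (⨆ t : I, ‖derivWithin γ I (t : ℝ) - derivWithin δ I (t : ℝ)‖)

/-- `γ` lies in the `C¹`-interior of the family `Ω` of graph curves over `I`. -/
def InC1Interior (I : Set ℝ) (Ω : Set (ℝ → ℝ × ℝ × ℝ)) (γ : ℝ → ℝ × ℝ × ℝ) : Prop :=
  ∃ δ > 0, ∀ η : ℝ → ℝ × ℝ × ℝ, IsGraphCurve I η → C1dist I γ η < δ → η ∈ Ω

/-!
A curve `k` with `(k v).1` locally invertible can be reparametrised to a graph, and the velocity of
the graph is the velocity of `k` rescaled to have first component `1`. So the `1`-jet of the graph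
is a continuous function of the `1`-jet of `k`. If `h ∘ s` is a graph, `(h v).1` has nonzero
derivative along `s`; for `k` close to `h` in `C¹` the equation `(k v).1 = t` therefore has exactly
one solution `v = r t` near `s t`, uniformly in `t`. The inverse function theorem makes `r` a `C¹`
function, and the jet of `k ∘ r` at `t` is close to that of `h ∘ s`. It remains to take `h = f ∘ α`
and `k = g ∘ γ`, which are `C¹`-close because the jet of `g ∘ γ` depends continuously on the jets
of `g` and `γ`.
-/

open Filter Metric Topology

section Compactness

theorem exists_pos_forall_closedBall_dist_lt {X Y : Type*} [PseudoMetricSpace X]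
    [PseudoMetricSpace Y] {K U : Set X} {f : X → Y} (hK : IsCompact K) (hU : IsOpen U)
    (hKU : K ⊆ U) (hf : ContinuousOn f U) {ε : ℝ} (hε : 0 < ε) :
    ∃ η > 0, ∀ x ∈ K, ∀ y ∈ closedBall x η, y ∈ U ∧ dist (f y) (f x) < ε := by
  obtain ⟨η₁, hη₁, hsub⟩ := hK.exists_cthickening_subset_open hU hKU
  obtain ⟨η₂, hη₂, hunif⟩ := mem_uniformity_dist.1 <| hK.uniformContinuousAt_of_continuousAt f
    (fun x hx => hf.continuousAt (hU.mem_nhds (hKU hx))) (dist_mem_uniformity hε)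
  refine ⟨min η₁ (η₂ / 2), by positivity, fun x hx y hy => ⟨?_, ?_⟩⟩
  · exact hsub (mem_cthickening_of_dist_le y x _ _ hx (hy.trans (min_le_left _ _)))
  · have hxy : dist x y < η₂ := by
      linarith [mem_closedBall'.1 hy, min_le_right η₁ (η₂ / 2)]
    exact (dist_comm _ _).trans_lt (hunif hxy hx)

theorem exists_pos_forall_closedBall_dist_lt_of_near {X Y : Type*} [PseudoMetricSpace X]
    [PseudoMetricSpace Y] {K U : Set X} {f : X → Y} (hK : IsCompact K) (hU : IsOpen U)
    (hKU : K ⊆ U) (hf : ContinuousOn f U) {ε : ℝ} (hε : 0 < ε) :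
    ∃ η > 0, ∀ g : X → Y, (∀ y ∈ U, dist (g y) (f y) < ε / 2) →
      ∀ x ∈ K, ∀ y ∈ closedBall x η, y ∈ U ∧ dist (g y) (f x) < ε := by
  obtain ⟨η, hη, hfη⟩ := exists_pos_forall_closedBall_dist_lt hK hU hKU hf (half_pos hε)
  refine ⟨η, hη, fun g hg x hx y hy => ?_⟩
  obtain ⟨hyU, hfy⟩ := hfη x hx y hy
  exact ⟨hyU, by linarith [dist_triangle (g y) (f y) (f x), hg y hyU]⟩

theorem dist_lt_of_iSup_norm_add_norm_lt {X E F : Type*} [TopologicalSpace X]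
    [SeminormedAddCommGroup E] [SeminormedAddCommGroup F] {K : Set X} (hK : IsCompact K)
    {u v : X → E × F} (hu : ContinuousOn u K) (hv : ContinuousOn v K) {ε : ℝ}
    (h : (⨆ p : K, (‖(u p).1 - (v p).1‖ + ‖(u p).2 - (v p).2‖)) < ε) {p : X} (hp : p ∈ K) :
    dist (u p) (v p) < ε := by
  have hcont : ContinuousOn (fun p => ‖(u p).1 - (v p).1‖ + ‖(u p).2 - (v p).2‖) K :=
    (hu.fst.sub hv.fst).norm.add (hu.snd.sub hv.snd).norm
  refine lt_of_le_of_lt ?_ ((le_ciSup_set (hK.bddAbove_image hcont) hp).trans_lt h)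
  rw [dist_eq_norm]
  exact max_le_add_of_nonneg (norm_nonneg _) (norm_nonneg _)

theorem iSup_norm_sub_le_add_iSup_norm_sub {X E : Type*} [TopologicalSpace X]
    [SeminormedAddCommGroup E] {K : Set X} (hK : IsCompact K) {u v w : X → E}
    (hv : ContinuousOn v K) (hw : ContinuousOn w K) {δ : ℝ} (hδ : 0 ≤ δ)
    (huv : ∀ p ∈ K, ‖v p - u p‖ ≤ δ) :
    (⨆ p : K, ‖u p - w p‖) ≤ δ + ⨆ p : K, ‖v p - w p‖ := by
  refine Real.iSup_le (fun p => ?_) (add_nonneg hδ (Real.iSup_nonneg fun _ => norm_nonneg _))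
  calc ‖u p - w p‖ ≤ ‖u p - v p‖ + ‖v p - w p‖ := norm_sub_le_norm_sub_add_norm_sub ..
    _ ≤ δ + ⨆ p : K, ‖v p - w p‖ := by
      rw [norm_sub_rev]
      exact add_le_add (huv p p.2)
        (le_ciSup_set (f := fun p => ‖v p - w p‖) (hK.bddAbove_image (hv.sub hw).norm) p.2)

end Compactness

section LocalSection

theorem contDiffWithinAt_of_eventually_unique_section {𝕜 E F : Type*} [RCLike 𝕜]
    [NormedAddCommGroup E] [NormedSpace 𝕜 E] [CompleteSpace E] [NormedAddCommGroup F]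
    [NormedSpace 𝕜 F] {n : WithTop ℕ∞} (hn : n ≠ 0) {G : E → F} {G' : E ≃L[𝕜] F} {r : F → E}
    {I : Set F} {t₀ : F} (hG : ContDiffAt 𝕜 n G (r t₀))
    (hG' : HasFDerivAt G (G' : E →L[𝕜] F) (r t₀)) (hr : G (r t₀) = t₀)
    (huniq : ∀ᶠ p in 𝓝[I] t₀ ×ˢ 𝓝 (r t₀), G p.2 = p.1 → p.2 = r p.1) :
    ContDiffWithinAt 𝕜 n r I t₀ := by
  set ρ := hG.localInverse hG' hn
  have hρ : ContDiffAt 𝕜 n ρ t₀ := by simpa only [hr] using hG.to_localInverse hG' hn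
  have hρt₀ : ρ t₀ = r t₀ := by simpa only [hr] using hG.localInverse_apply_image hG' hn
  have hinv : ∀ᶠ t in 𝓝[I] t₀, G (ρ t) = t := by
    have := (hG.hasStrictFDerivAt' hG' hn).eventually_right_inverse
    rw [hr] at this
    exact this.filter_mono nhdsWithin_le_nhds
  have hlim : Tendsto (fun t => (t, ρ t)) (𝓝[I] t₀) (𝓝[I] t₀ ×ˢ 𝓝 (r t₀)) :=
    tendsto_id.prodMk (hρt₀ ▸ hρ.continuousAt.continuousWithinAt)
  refine hρ.contDiffWithinAt.congr_of_eventuallyEq ?_ hρt₀.symm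
  filter_upwards [hlim.eventually huniq, hinv] with t ht hinvt using (ht hinvt).symm

theorem existsUnique_mem_ball_eq_zero_of_le_deriv {φ : ℝ → ℝ} {u η m : ℝ} (hm : 0 < m)
    (hφ : ∀ v ∈ closedBall u η, DifferentiableAt ℝ φ v)
    (hφ' : ∀ v ∈ closedBall u η, m ≤ deriv φ v) (hu : |φ u| < m * η) :
    ∃! w, w ∈ ball u η ∧ φ w = 0 := by
  have hη : 0 < η := pos_of_mul_pos_right ((abs_nonneg _).trans_lt hu) hm.le
  rw [Real.closedBall_eq_Icc] at hφ hφ'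
  rw [Real.ball_eq_Ioo]
  have hcont : ContinuousOn φ (Icc (u - η) (u + η)) :=
    fun v hv => (hφ v hv).continuousAt.continuousWithinAt
  have hgrow := (convex_Icc (u - η) (u + η)).mul_sub_le_image_sub_of_le_deriv hcont
    (fun v hv => (hφ v (interior_subset hv)).differentiableWithinAt)
    (fun v hv => hφ' v (interior_subset hv))
  have hmono : StrictMonoOn φ (Icc (u - η) (u + η)) := fun v hv w hw hvw =>
    sub_pos.1 ((mul_pos hm (sub_pos.2 hvw)).trans_le (hgrow v hv w hw hvw.le))
  have hleft := hgrow (u - η) ⟨le_rfl, by linarith⟩ u ⟨by linarith, by linarith⟩ (by linarith)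
  have hright := hgrow u ⟨by linarith, by linarith⟩ (u + η) ⟨by linarith, le_rfl⟩ (by linarith)
  rw [sub_sub_cancel] at hleft
  rw [add_sub_cancel_left] at hright
  obtain ⟨w, hw, hw0⟩ := intermediate_value_Ioo (by linarith : u - η ≤ u + η) hcont
    (show (0 : ℝ) ∈ Ioo (φ (u - η)) (φ (u + η)) from
      ⟨by linarith [(abs_lt.1 hu).2], by linarith [(abs_lt.1 hu).1]⟩)
  exact ⟨w, ⟨hw, hw0⟩, fun v hv => hmono.injOn (Ioo_subset_Icc_self hv.1) (Ioo_subset_Icc_self hw)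
    (hv.2.trans hw0.symm)⟩

theorem existsUnique_mem_ball_eq_of_abs_deriv_sub_le {G : ℝ → ℝ} {c u η t : ℝ} (hc : c ≠ 0)
    (hG : ∀ v ∈ closedBall u η, DifferentiableAt ℝ G v)
    (hG' : ∀ v ∈ closedBall u η, |deriv G v - c| ≤ |c| / 2) (hu : |G u - t| < |c| / 2 * η) :
    ∃! w, w ∈ ball u η ∧ G w = t := by
  have hroot : ∃! w, w ∈ ball u η ∧ c * (G w - t) = 0 := by
    refine existsUnique_mem_ball_eq_zero_of_le_deriv (m := |c| * (|c| / 2)) (by positivity)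
      (fun v hv => ((hG v hv).sub_const t).const_mul c) (fun v hv => ?_) ?_
    · rw [deriv_const_mul c ((hG v hv).sub_const t), deriv_sub_const]
      have hdiff : |c * (deriv G v - c)| ≤ |c| * (|c| / 2) := by
        rw [abs_mul]
        gcongr
        exact hG' v hv
      linarith [(abs_le.1 hdiff).1, abs_mul_abs_self c]
    · rw [abs_mul, mul_assoc]
      gcongr
  simpa only [mul_eq_zero, hc, false_or, sub_eq_zero] using hroot

theorem exists_contDiffOn_section_of_abs_deriv_sub_le {I : Set ℝ} {G c s : ℝ → ℝ} {η : ℝ}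
    {n : WithTop ℕ∞} (hn : n ≠ 0) (hs : ContinuousOn s I) (hc : ∀ t ∈ I, c t ≠ 0)
    (hG : ∀ t ∈ I, ∀ v ∈ closedBall (s t) η, ContDiffAt ℝ n G v)
    (hG' : ∀ t ∈ I, ∀ v ∈ closedBall (s t) η, |deriv G v - c t| ≤ |c t| / 2)
    (hGs : ∀ t ∈ I, |G (s t) - t| < |c t| / 2 * η) :
    ∃ r : ℝ → ℝ, ContDiffOn ℝ n r I ∧ ∀ t ∈ I, r t ∈ ball (s t) η ∧ G (r t) = t := by
  choose! r hr hruniq using fun t ht => existsUnique_mem_ball_eq_of_abs_deriv_sub_le (hc t ht)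
    (fun v hv => (hG t ht v hv).differentiableAt hn) (hG' t ht) (hGs t ht)
  refine ⟨r, fun t ht => ?_, hr⟩
  have hGr := hG t ht _ (ball_subset_closedBall (hr t ht).1)
  have hderiv : deriv G (r t) ≠ 0 := fun h => by
    have := hG' t ht _ (ball_subset_closedBall (hr t ht).1)
    rw [h, zero_sub, abs_neg] at this
    linarith [abs_pos.2 (hc t ht)]
  refine contDiffWithinAt_of_eventually_unique_section hn hGr
    ((hGr.differentiableAt hn).hasDerivAt.hasFDerivAt_equiv hderiv) (hr t ht).2 ?_
  have hdist : Tendsto (fun p : ℝ × ℝ => dist p.2 (s p.1)) (𝓝[I] t ×ˢ 𝓝 (r t))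
      (𝓝 (dist (r t) (s t))) :=
    tendsto_snd.dist ((hs t ht).tendsto.comp tendsto_fst)
  filter_upwards [hdist.eventually_lt_const (hr t ht).1,
    tendsto_fst.eventually self_mem_nhdsWithin] with p hp hpI hGp
  exact hruniq p.1 hpI p.2 ⟨hp, hGp⟩

end LocalSection

section Jets

variable {E F : Type*} [NormedAddCommGroup E] [NormedSpace ℝ E] [NormedAddCommGroup F]
  [NormedSpace ℝ F] {I J : Set ℝ}

/-- The `1`-jet of the curve `γ` at `t`: its position and its velocity, the latter taken within
`I`. Since products carry the sup norm, curves are `C¹`-close exactly when their jets are uniformly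
close. -/
noncomputable def jetWithin (I : Set ℝ) (γ : ℝ → E) (t : ℝ) : E × E :=
  (γ t, derivWithin γ I t)

/-- The `1`-jet which a curve with `1`-jet `q` acquires when it is reparametrised to a graph over
the first coordinate: its velocity is rescaled to have first component `1`. This is only meaningful
when that component of `q.2` is nonzero. -/
noncomputable def graphJet (q : (ℝ × F) × (ℝ × F)) : (ℝ × F) × (ℝ × F) :=
  (q.1, q.2.1⁻¹ • q.2)

theorem continuousOn_graphJet :
    ContinuousOn (graphJet (F := F)) {q | q.2.1 ≠ 0} :=
  continuousOn_fst.prodMk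
    ((continuousOn_snd.fst.inv₀ fun _ hq => hq).smul continuousOn_snd)

theorem continuousOn_jetWithin {γ : ℝ → E} (hγ : ContDiffOn ℝ 1 γ I)
    (hI : UniqueDiffOn ℝ I) : ContinuousOn (jetWithin I γ) I :=
  hγ.continuousOn.prodMk (hγ.continuousOn_derivWithin hI le_rfl)

theorem jetWithin_comp {γ : ℝ → E} {f : E → F} {t : ℝ} (hf : DifferentiableAt ℝ f (γ t))
    (hγ : DifferentiableWithinAt ℝ γ I t) (hI : UniqueDiffWithinAt ℝ I t) :
    jetWithin I (f ∘ γ) t = (f (γ t), fderiv ℝ f (γ t) (derivWithin γ I t)) :=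
  Prod.ext rfl ((hf.hasFDerivAt.comp_hasDerivWithinAt t hγ.hasDerivWithinAt).derivWithin hI)

theorem exists_forall_dist_jetWithin_comp_lt [ProperSpace E] (hJ : IsCompact J)
    (hJd : UniqueDiffOn ℝ J) {f : E → F} (hf : ContDiff ℝ 1 f) {α : ℝ → E}
    (hα : ContDiffOn ℝ 1 α J) {θ : ℝ} (hθ : 0 < θ) :
    ∃ ε > 0, ∃ K : Set E, IsCompact K ∧ ∀ g : E → F, ContDiff ℝ 1 g →
      (∀ p ∈ K, dist (g p, fderiv ℝ g p) (f p, fderiv ℝ f p) < ε) →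
      ∀ γ : ℝ → E, ContDiffOn ℝ 1 γ J →
        (∀ t ∈ J, dist (jetWithin J γ t) (jetWithin J α t) < ε) →
        ∀ t ∈ J, dist (jetWithin J (g ∘ γ) t) (jetWithin J (f ∘ α) t) < θ := by
  -- `Ψ` computes the jet of `g ∘ γ` from the jet of `γ` and the value and derivative of `g - f`.
  let Ψ : (E × E) × (F × (E →L[ℝ] F)) → F × F := fun q =>
    (f q.1.1 + q.2.1, (fderiv ℝ f q.1.1 + q.2.2) q.1.2)
  have hΨ : Continuous Ψ := by
    have := hf.continuous
    have := hf.continuous_fderiv one_ne_zero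
    fun_prop
  have hC : IsCompact ((fun t => (jetWithin J α t, (0 : F × (E →L[ℝ] F)))) '' J) :=
    hJ.image_of_continuousOn ((continuousOn_jetWithin hα hJd).prodMk continuousOn_const)
  obtain ⟨η, hη, hΨη⟩ := exists_pos_forall_closedBall_dist_lt hC isOpen_univ (subset_univ _)
    hΨ.continuousOn hθ
  refine ⟨min η 1, by positivity, cthickening 1 (α '' J),
    (hJ.image_of_continuousOn hα.continuousOn).cthickening, fun g hg hgf γ hγ hγα t ht => ?_⟩
  have hγK : γ t ∈ cthickening 1 (α '' J) := mem_cthickening_of_dist_le _ _ _ _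
    (mem_image_of_mem α ht) ((le_max_left _ _).trans ((hγα t ht).le.trans (min_le_right _ _)))
  have hclose := (hΨη _ (mem_image_of_mem _ ht)
    (jetWithin J γ t, (g (γ t), fderiv ℝ g (γ t)) - (f (γ t), fderiv ℝ f (γ t))) (max_le
      ((hγα t ht).le.trans (min_le_left _ _)) (by
        rw [dist_zero_right, ← dist_eq_norm]
        exact (hgf _ hγK).le.trans (min_le_left _ _)))).2
  rw [jetWithin_comp (hg.differentiable one_ne_zero _) (hγ.differentiableOn one_ne_zero t ht)
    (hJd t ht), jetWithin_comp (hf.differentiable one_ne_zero _)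
    (hα.differentiableOn one_ne_zero t ht) (hJd t ht)]
  simpa [Ψ, jetWithin] using hclose

end Jets

section GraphReparametrization

variable {F : Type*} [NormedAddCommGroup F] [NormedSpace ℝ F] {I J : Set ℝ}

theorem hasDerivAt_derivWithin_of_mem_interior {k : ℝ → F} {v : ℝ} (hk : DifferentiableOn ℝ k J)
    (hv : v ∈ interior J) : HasDerivAt k (derivWithin k J v) v :=
  (hk v (interior_subset hv)).hasDerivWithinAt.hasDerivAt (mem_interior_iff_mem_nhds.1 hv)

theorem derivWithin_mul_fst_derivWithin_eq_one {k : ℝ → ℝ × F} {r : ℝ → ℝ} {t : ℝ}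
    (hI : UniqueDiffWithinAt ℝ I t) (ht : t ∈ I) (hk : DifferentiableOn ℝ k J)
    (hr : DifferentiableWithinAt ℝ r I t) (hrt : r t ∈ interior J)
    (hkr : ∀ t ∈ I, (k (r t)).1 = t) :
    derivWithin r I t * (derivWithin k J (r t)).1 = 1 := by
  have hfst : HasDerivWithinAt (fun τ => (k (r τ)).1)
      (derivWithin r I t * (derivWithin k J (r t)).1) I t :=
    (ContinuousLinearMap.fst ℝ ℝ F).hasFDerivAt.comp_hasDerivWithinAt t
      ((hasDerivAt_derivWithin_of_mem_interior hk hrt).scomp_hasDerivWithinAt t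
        hr.hasDerivWithinAt)
  exact hI.eq_deriv _ hfst ((hasDerivWithinAt_id t I).congr hkr (hkr t ht))

theorem jetWithin_comp_eq_graphJet {k : ℝ → ℝ × F} {r : ℝ → ℝ} {t : ℝ}
    (hI : UniqueDiffWithinAt ℝ I t) (ht : t ∈ I) (hk : DifferentiableOn ℝ k J)
    (hr : DifferentiableWithinAt ℝ r I t) (hrt : r t ∈ interior J)
    (hkr : ∀ t ∈ I, (k (r t)).1 = t) :
    jetWithin I (k ∘ r) t = graphJet (jetWithin J k (r t)) := by
  have hspeed : derivWithin r I t = (derivWithin k J (r t)).1⁻¹ :=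
    eq_inv_of_mul_eq_one_left (derivWithin_mul_fst_derivWithin_eq_one hI ht hk hr hrt hkr)
  have hvel : derivWithin (k ∘ r) I t = derivWithin r I t • derivWithin k J (r t) :=
    ((hasDerivAt_derivWithin_of_mem_interior hk hrt).scomp_hasDerivWithinAt t
      hr.hasDerivWithinAt).derivWithin hI
  exact Prod.ext rfl (hvel.trans (by rw [hspeed]; rfl))

theorem exists_contDiffOn_graph_reparam_of_dist_jetWithin_le {k : ℝ → ℝ × F}
    (hk : ContDiffOn ℝ 1 k J) {s : ℝ → ℝ} (hs : ContinuousOn s I)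
    {q : ℝ → (ℝ × F) × (ℝ × F)} {m η : ℝ} (hm : 0 < m) (hqm : ∀ t ∈ I, m ≤ |(q t).2.1|)
    (hqt : ∀ t ∈ I, (q t).1.1 = t) (hsJ : ∀ t ∈ I, closedBall (s t) η ⊆ interior J)
    (hkq : ∀ t ∈ I, ∀ v ∈ closedBall (s t) η, dist (jetWithin J k v) (q t) ≤ m / 2)
    (hks : ∀ t ∈ I, dist (jetWithin J k (s t)) (q t) < m / 2 * η) :
    ∃ r : ℝ → ℝ, ContDiffOn ℝ 1 r I ∧ ∀ t ∈ I, r t ∈ ball (s t) η ∧ (k (r t)).1 = t := by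
  have hderiv : ∀ v ∈ interior J, HasDerivAt (fun v => (k v).1) (derivWithin k J v).1 v :=
    fun v hv => (ContinuousLinearMap.fst ℝ ℝ F).hasFDerivAt.comp_hasDerivAt v
      (hasDerivAt_derivWithin_of_mem_interior (hk.differentiableOn one_ne_zero) hv)
  refine exists_contDiffOn_section_of_abs_deriv_sub_le (G := fun v => (k v).1)
    (c := fun t => (q t).2.1) one_ne_zero hs (fun t ht => abs_pos.1 (hm.trans_le (hqm t ht)))
    (fun t ht v hv => ?_) (fun t ht v hv => ?_) fun t ht => ?_
  · exact (hk.contDiffAt (mem_interior_iff_mem_nhds.1 (hsJ t ht hv))).fst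
  · rw [(hderiv v (hsJ t ht hv)).deriv]
    have hvel : |(derivWithin k J v).1 - (q t).2.1| ≤ dist (jetWithin J k v) (q t) :=
      (le_max_left _ _).trans (le_max_right _ _)
    linarith [hkq t ht v hv, hqm t ht]
  · have hη : 0 < η :=
      pos_of_mul_pos_right (dist_nonneg.trans_lt (hks t ht)) (half_pos hm).le
    have hpos : |(k (s t)).1 - (q t).1.1| ≤ dist (jetWithin J k (s t)) (q t) :=
      (le_max_left _ _).trans (le_max_left _ _)
    rw [hqt t ht] at hpos
    calc |(k (s t)).1 - t| < m / 2 * η := hpos.trans_lt (hks t ht)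
      _ ≤ |(q t).2.1| / 2 * η := by
        gcongr
        exact hqm t ht

theorem exists_forall_exists_graph_reparam (hI : IsCompact I) (hId : UniqueDiffOn ℝ I)
    (hJd : UniqueDiffOn ℝ J) {h : ℝ → ℝ × F} (hh : ContDiffOn ℝ 1 h J) {s : ℝ → ℝ}
    (hs : DifferentiableOn ℝ s I) (hsJ : MapsTo s I (interior J))
    (hhs : ∀ t ∈ I, (h (s t)).1 = t) {δ : ℝ} (hδ : 0 < δ) :
    ∃ ε > 0, ∀ k : ℝ → ℝ × F, ContDiffOn ℝ 1 k J →
      (∀ v ∈ J, dist (jetWithin J k v) (jetWithin J h v) < ε) →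
      ∃ r : ℝ → ℝ, ContDiffOn ℝ 1 r I ∧ MapsTo r I (interior J) ∧ (∀ t ∈ I, (k (r t)).1 = t) ∧
        ∀ t ∈ I, dist (jetWithin I (k ∘ r) t) (jetWithin I (h ∘ s) t) < δ := by
  have hjet : ContinuousOn (jetWithin J h) J := continuousOn_jetWithin hh hJd
  have hjets : ContinuousOn (fun t => jetWithin J h (s t)) I :=
    hjet.comp hs.continuousOn (hsJ.mono_right interior_subset)
  have hhd : DifferentiableOn ℝ h J := hh.differentiableOn one_ne_zero
  have hne : ∀ t ∈ I, (derivWithin h J (s t)).1 ≠ 0 := fun t ht => right_ne_zero_of_mul_eq_one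
    (derivWithin_mul_fst_derivWithin_eq_one (hId t ht) ht hhd (hs t ht) (hsJ ht) hhs)
  obtain ⟨m, hm, hslope⟩ := hI.exists_forall_le' hjets.snd.fst.abs
    fun t ht => abs_pos.2 (hne t ht)
  have hopen : IsOpen {q : (ℝ × F) × (ℝ × F) | q.2.1 ≠ 0} :=
    isOpen_ne_fun (by fun_prop) continuous_const
  obtain ⟨θ, hθ, hgraphJet⟩ := exists_pos_forall_closedBall_dist_lt
    (hI.image_of_continuousOn hjets) hopen (image_subset_iff.2 hne) continuousOn_graphJet hδ
  obtain ⟨η, hη, htube⟩ := exists_pos_forall_closedBall_dist_lt_of_near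
    (hI.image_of_continuousOn hs.continuousOn) isOpen_interior (image_subset_iff.2 hsJ)
    (hjet.mono interior_subset) (show 0 < min θ (m / 2) by positivity)
  refine ⟨min (min θ (m / 2) / 2) (m / 2 * η), by positivity, fun k hk hkh => ?_⟩
  have hnear := fun t (ht : t ∈ I) => htube (jetWithin J k)
    (fun v hv => (hkh v (interior_subset hv)).trans_le (min_le_left _ _)) _ (mem_image_of_mem s ht)
  obtain ⟨r, hr, hrs⟩ := exists_contDiffOn_graph_reparam_of_dist_jetWithin_le hk hs.continuousOn
    hm hslope hhs (fun t ht v hv => (hnear t ht v hv).1)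
    (fun t ht v hv => (hnear t ht v hv).2.le.trans (min_le_right _ _))
    (fun t ht => (hkh _ (interior_subset (hsJ ht))).trans_le (min_le_right _ _))
  have hnear_r := fun t (ht : t ∈ I) => hnear t ht (r t) (ball_subset_closedBall (hrs t ht).1)
  have hkr : ∀ t ∈ I, (k (r t)).1 = t := fun t ht => (hrs t ht).2
  refine ⟨r, hr, fun t ht => (hnear_r t ht).1, hkr, fun t ht => ?_⟩
  rw [jetWithin_comp_eq_graphJet (hId t ht) ht hhd (hs t ht) (hsJ ht) hhs,
    jetWithin_comp_eq_graphJet (hId t ht) ht (hk.differentiableOn one_ne_zero)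
      (hr.differentiableOn one_ne_zero t ht) (hnear_r t ht).1 hkr]
  exact (hgraphJet _ (mem_image_of_mem _ ht) _ ((hnear_r t ht).2.le.trans (min_le_left _ _))).2

end GraphReparametrization

section C1Interior

variable {I J : Set ℝ}

theorem C1dist_le_two_mul_add_C1dist (hI : IsCompact I) (hId : UniqueDiffOn ℝ I)
    {a b c : ℝ → ℝ × ℝ × ℝ} (hb : ContDiffOn ℝ 1 b I) (hc : ContDiffOn ℝ 1 c I) {δ : ℝ}
    (hδ : 0 ≤ δ) (hab : ∀ t ∈ I, dist (jetWithin I b t) (jetWithin I a t) ≤ δ) :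
    C1dist I a c ≤ 2 * δ + C1dist I b c := by
  have hpos := iSup_norm_sub_le_add_iSup_norm_sub hI hb.continuousOn hc.continuousOn hδ
    fun t ht => dist_eq_norm (b t) (a t) ▸ (le_max_left _ _).trans (hab t ht)
  have hvel := iSup_norm_sub_le_add_iSup_norm_sub hI (hb.continuousOn_derivWithin hId le_rfl)
    (hc.continuousOn_derivWithin hId le_rfl) hδ
    fun t ht => dist_eq_norm (derivWithin b I t) (derivWithin a I t) ▸
      (le_max_right _ _).trans (hab t ht)
  unfold C1dist
  linarith

theorem InC1Interior.exists_forall_of_dist_jetWithin_lt (hI : IsCompact I)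
    (hId : UniqueDiffOn ℝ I) {Ω : Set (ℝ → ℝ × ℝ × ℝ)} {a : ℝ → ℝ × ℝ × ℝ}
    (ha : InC1Interior I Ω a) :
    ∃ δ > 0, ∀ b : ℝ → ℝ × ℝ × ℝ, ContDiffOn ℝ 1 b I →
      (∀ t ∈ I, dist (jetWithin I b t) (jetWithin I a t) < δ) → InC1Interior I Ω b := by
  obtain ⟨δ, hδ, haΩ⟩ := ha
  refine ⟨δ / 4, by positivity, fun b hb hab =>
    ⟨δ / 2, by positivity, fun c hc hbc => haΩ c hc ?_⟩⟩
  linarith [C1dist_le_two_mul_add_C1dist hI hId hb hc.1 (by positivity) fun t ht => (hab t ht).le]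

theorem stmt2_general {E : Type*} [NormedAddCommGroup E] [NormedSpace ℝ E] [ProperSpace E]
    (hI : IsCompact I) (hId : UniqueDiffOn ℝ I) (hJ : IsCompact J) (hJd : UniqueDiffOn ℝ J)
    {Ω : Set (ℝ → ℝ × ℝ × ℝ)} {f : E → ℝ × ℝ × ℝ} (hf : ContDiff ℝ 1 f) {α : ℝ → E}
    (hα : ContDiffOn ℝ 1 α J) {s : ℝ → ℝ} (hs : DifferentiableOn ℝ s I)
    (hsJ : MapsTo s I (interior J)) (hfst : ∀ t ∈ I, (f (α (s t))).1 = t)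
    (hint : InC1Interior I Ω (f ∘ α ∘ s)) :
    ∃ ε > 0, ∃ K : Set E, IsCompact K ∧ ∀ g : E → ℝ × ℝ × ℝ, ContDiff ℝ 1 g →
      (⨆ p : K, (‖g (p : E) - f (p : E)‖ + ‖fderiv ℝ g (p : E) - fderiv ℝ f (p : E)‖)) < ε →
      ∀ γ : ℝ → E, ContDiffOn ℝ 1 γ J →
        (⨆ t : J, (‖γ (t : ℝ) - α (t : ℝ)‖ +
          ‖derivWithin γ J (t : ℝ) - derivWithin α J (t : ℝ)‖)) < ε →
        ∃ r : ℝ → ℝ, ContDiffOn ℝ 1 r I ∧ (∀ t ∈ I, r t ∈ interior J) ∧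
          IsGraphCurve I (g ∘ γ ∘ r) ∧ InC1Interior I Ω (g ∘ γ ∘ r) := by
  obtain ⟨δ, hδ, hΩ⟩ := hint.exists_forall_of_dist_jetWithin_lt hI hId
  obtain ⟨θ, hθ, hreparam⟩ := exists_forall_exists_graph_reparam hI hId hJd
    (hf.comp_contDiffOn hα) hs hsJ hfst hδ
  obtain ⟨ε, hε, K, hK, hcomp⟩ := exists_forall_dist_jetWithin_comp_lt hJ hJd hf hα hθ
  refine ⟨ε, hε, K, hK, fun g hg hgf γ hγ hγα => ?_⟩
  have hjet : ∀ φ : E → ℝ × ℝ × ℝ, ContDiff ℝ 1 φ →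
      ContinuousOn (fun p => (φ p, fderiv ℝ φ p)) K := fun φ hφ =>
    (hφ.continuous.prodMk (hφ.continuous_fderiv one_ne_zero)).continuousOn
  have hgγ : ContDiffOn ℝ 1 (g ∘ γ) J := hg.comp_contDiffOn hγ
  obtain ⟨r, hr, hrJ, hrfst, hclose⟩ := hreparam (g ∘ γ) hgγ <| hcomp g hg
    (fun p hp => dist_lt_of_iSup_norm_add_norm_lt hK (hjet g hg) (hjet f hf) hgf hp) γ hγ
    fun t ht => dist_lt_of_iSup_norm_add_norm_lt hJ (continuousOn_jetWithin hγ hJd)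
      (continuousOn_jetWithin hα hJd) hγα ht
  have hcurve : ContDiffOn ℝ 1 (g ∘ γ ∘ r) I := hgγ.comp hr (hrJ.mono_right interior_subset)
  exact ⟨r, hr, hrJ, ⟨hcurve, hrfst⟩, hΩ _ hcurve hclose⟩

end C1Interior

/-- Quantitative form of the perturbation lemma (Lemma 2.4): if `f∘α∘s` lies in the
`C¹`-interior of `Ω`, then the same conclusion (with some reparametrisation `r`) holds for
every `g` `C¹`-close to `f` on a suitable compact set and every curve `γ` `C¹`-close to `α`. -/
theorem stmt2 (x0 x1 : ℝ) (hx : x0 < x1)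
    (Ω : Set (ℝ → ℝ × ℝ × ℝ)) (hΩ : ∀ γ ∈ Ω, IsGraphCurve (Icc x0 x1) γ)
    (f : ℝ × ℝ × ℝ → ℝ × ℝ × ℝ) (hf : ContDiff ℝ 1 f)
    (α : ℝ → ℝ × ℝ × ℝ) (hα : IsGraphCurve (Icc x0 x1) α)
    (s : ℝ → ℝ) (hs : ContDiffOn ℝ 1 s (Icc x0 x1))
    (hsmem : ∀ t ∈ Icc x0 x1, s t ∈ Ioo x0 x1)
    (hgraph : IsGraphCurve (Icc x0 x1) (f ∘ α ∘ s))
    (hint : InC1Interior (Icc x0 x1) Ω (f ∘ α ∘ s)) :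
    ∃ ε > 0, ∃ K : Set (ℝ × ℝ × ℝ), IsCompact K ∧
      ∀ g : ℝ × ℝ × ℝ → ℝ × ℝ × ℝ, ContDiff ℝ 1 g →
        (⨆ p : K, (‖g (p : ℝ × ℝ × ℝ) - f (p : ℝ × ℝ × ℝ)‖ +
          ‖fderiv ℝ g (p : ℝ × ℝ × ℝ) - fderiv ℝ f (p : ℝ × ℝ × ℝ)‖)) < ε →
        ∀ γ : ℝ → ℝ × ℝ × ℝ, ContDiffOn ℝ 1 γ (Icc x0 x1) →
          (⨆ t : Icc x0 x1, (‖γ (t : ℝ) - α (t : ℝ)‖ +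
            ‖derivWithin γ (Icc x0 x1) (t : ℝ) - derivWithin α (Icc x0 x1) (t : ℝ)‖)) < ε →
          ∃ r : ℝ → ℝ, ContDiffOn ℝ 1 r (Icc x0 x1) ∧
            (∀ t ∈ Icc x0 x1, r t ∈ Ioo x0 x1) ∧
            IsGraphCurve (Icc x0 x1) (g ∘ γ ∘ r) ∧
            InC1Interior (Icc x0 x1) Ω (g ∘ γ ∘ r) := by
  have hI : UniqueDiffOn ℝ (Icc x0 x1) := uniqueDiffOn_Icc hx
  simpa only [interior_Icc] using stmt2_general isCompact_Icc hI isCompact_Icc hI hf hα.1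
    (hs.differentiableOn one_ne_zero) (by rwa [interior_Icc]) hgraph.2 hint
end

section
/- Let I ⊂ ℝ be a nonempty compact interval, let γ₀ : I → ℝ³ be continuous, let g : ℝ³ → ℝ³ be continuous, and for each n ≥ 1 let r_n : I → I be continuous. Define inductively γ_n = g∘γ_{n−1}∘r_n. Then there exists a point p in the image of γ₀ such that for every n ≥ 1, gⁿ(p) lies in the image of γ_n. -/
open Set

/-!
Let `R n = r 1 ∘ ⋯ ∘ r n`. The sets `R n '' I` form a decreasing sequence of nonempty compact sets,
so they have a common point `t`. Unfolding the recursion gives `γ n = g^[n] ∘ γ 0 ∘ R n`; hence,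
writing `t = R n u` with `u ∈ I`, one gets `g^[n] (γ 0 t) = γ n u`, and `p = γ 0 t` works for every
`n` at once.
-/

section InverseSequence

variable {X : ℕ → Type*} {r : ∀ n, X (n + 1) → X n} {K : ∀ n, Set (X n)}

/-- The composite `r 0 ∘ r 1 ∘ ⋯ ∘ r (n - 1) : X n → X 0` of the bonding maps of an inverse
sequence `X 0 ← X 1 ← X 2 ← ⋯`. Here `r n` is the map out of `X (n + 1)`, so for a sequence of
reparametrisations indexed from `1` it is the `(n + 1)`-st one. -/
def bondingComp (r : ∀ n, X (n + 1) → X n) : ∀ n, X n → X 0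
  | 0 => id
  | n + 1 => bondingComp r n ∘ r n

theorem continuousOn_bondingComp [∀ n, TopologicalSpace (X n)]
    (hcont : ∀ n, ContinuousOn (r n) (K (n + 1))) (hmaps : ∀ n, MapsTo (r n) (K (n + 1)) (K n)) :
    ∀ n, ContinuousOn (bondingComp r n) (K n)
  | 0 => continuousOn_id
  | n + 1 => (continuousOn_bondingComp hcont hmaps n).comp (hcont n) (hmaps n)

theorem bondingComp_image_succ_subset {n : ℕ} (hmaps : MapsTo (r n) (K (n + 1)) (K n)) :
    bondingComp r (n + 1) '' K (n + 1) ⊆ bondingComp r n '' K n := by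
  rw [bondingComp, image_comp]
  exact image_mono hmaps.image_subset

theorem nonempty_iInter_bondingComp_image [∀ n, TopologicalSpace (X n)] [T2Space (X 0)]
    (hK : ∀ n, IsCompact (K n)) (hne : ∀ n, (K n).Nonempty)
    (hcont : ∀ n, ContinuousOn (r n) (K (n + 1))) (hmaps : ∀ n, MapsTo (r n) (K (n + 1)) (K n)) :
    (⋂ n, bondingComp r n '' K n).Nonempty := by
  have hcompact (n : ℕ) : IsCompact (bondingComp r n '' K n) :=
    (hK n).image_of_continuousOn (continuousOn_bondingComp hcont hmaps n)
  exact IsCompact.nonempty_iInter_of_sequence_nonempty_isCompact_isClosed _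
    (fun n => bondingComp_image_succ_subset (hmaps n)) (fun n => (hne n).image _)
    (hcompact 0) (fun n => (hcompact n).isClosed)

theorem eqOn_iterate_comp_bondingComp {Y : Type*} {γ : ∀ n, X n → Y} {g : Y → Y}
    (hmaps : ∀ n, MapsTo (r n) (K (n + 1)) (K n))
    (hrec : ∀ n, EqOn (γ (n + 1)) (g ∘ γ n ∘ r n) (K (n + 1))) (n : ℕ) :
    EqOn (γ n) (g^[n] ∘ γ 0 ∘ bondingComp r n) (K n) := by
  induction n with
  | zero => exact eqOn_refl _ _
  | succ n ih =>
    intro x hx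
    calc γ (n + 1) x = g (γ n (r n x)) := hrec n hx
      _ = g (g^[n] (γ 0 (bondingComp r n (r n x)))) := congrArg g (ih (hmaps n hx))
      _ = g^[n + 1] (γ 0 (bondingComp r (n + 1) x)) := (Function.iterate_succ_apply' g n _).symm

theorem stmt5_general [∀ n, TopologicalSpace (X n)] [T2Space (X 0)] {Y : Type*}
    {γ : ∀ n, X n → Y} {g : Y → Y} (hK : ∀ n, IsCompact (K n)) (hne : ∀ n, (K n).Nonempty)
    (hcont : ∀ n, ContinuousOn (r n) (K (n + 1))) (hmaps : ∀ n, MapsTo (r n) (K (n + 1)) (K n))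
    (hrec : ∀ n, EqOn (γ (n + 1)) (g ∘ γ n ∘ r n) (K (n + 1))) :
    ∃ p ∈ γ 0 '' K 0, ∀ n, g^[n] p ∈ γ n '' K n := by
  obtain ⟨t, ht⟩ := nonempty_iInter_bondingComp_image hK hne hcont hmaps
  rw [mem_iInter] at ht
  have ht0 : t ∈ K 0 := by simpa only [bondingComp, image_id] using ht 0
  refine ⟨γ 0 t, mem_image_of_mem _ ht0, fun n => ?_⟩
  obtain ⟨u, hu, rfl⟩ := ht n
  exact ⟨u, hu, eqOn_iterate_comp_bondingComp hmaps hrec n hu⟩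

end InverseSequence

/-- The inverse-limit/compactness argument of Proposition 2.3: given a continuous curve `γ 0`
on a nonempty compact interval, a continuous map `g`, and continuous reparametrisations
`r n : I → I`, the inductively defined curves `γ n = g ∘ γ (n-1) ∘ r n` admit a single point
`p` on `γ 0` whose `n`-th image under `g` lies on `γ n` for every `n ≥ 1`. -/
theorem stmt5 (x0 x1 : ℝ) (hx : x0 ≤ x1)
    (γ : ℕ → ℝ → ℝ × ℝ × ℝ) (g : ℝ × ℝ × ℝ → ℝ × ℝ × ℝ) (r : ℕ → ℝ → ℝ)
    (hγ0 : ContinuousOn (γ 0) (Icc x0 x1))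
    (hg : Continuous g)
    (hr : ∀ n : ℕ, 1 ≤ n →
      ContinuousOn (r n) (Icc x0 x1) ∧ MapsTo (r n) (Icc x0 x1) (Icc x0 x1))
    (hrec : ∀ n : ℕ, γ (n + 1) = g ∘ γ n ∘ r (n + 1)) :
    ∃ p ∈ γ 0 '' Icc x0 x1, ∀ n : ℕ, 1 ≤ n → g^[n] p ∈ γ n '' Icc x0 x1 := by
  obtain ⟨p, hp, hiter⟩ := stmt5_general (fun _ => isCompact_Icc) (fun _ => nonempty_Icc.mpr hx)
    (fun n => (hr _ n.succ_pos).1) (fun n => (hr _ n.succ_pos).2) fun n _ _ => congrFun (hrec n) _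
  exact ⟨p, hp, fun n _ => hiter n⟩
end

section
/- Let I = [x0, x1] with x0 < x1 and T = [t0, t1] ⊆ I. Let f : ℝ³ → ℝ³ be a C¹ diffeomorphism, let p_y, p_z, q_y, q_z : ℝ → ℝ be polynomial functions, and define α(t) = (t, p_y(t), p_z(t)), β(t) = (t, q_y(t), q_z(t)), φ_α(x,y,z) = (x, y + p_y(x), z + p_z(x)), φ_β(x,y,z) = (x, y + q_y(x), z + q_z(x)), and f_{α,β} = φ_β^{−1} ∘ f ∘ φ_α. Fix positive reals ε_y, ε_z, ε̂_z and an integer k > 1, and let B = T × [−ε_y, ε_y] × [−ε_z, ε_z]. Write π_x, π_y, π_z for the coordinate projections. Assume: (1) either π_x∘f_{α,β} < x0 on {t0} × [−ε_y, ε_y] × [−ε_z, ε_z] and π_x∘f_{α,β} > x1 on {t1} × [−ε_y, ε_y] × [−ε_z, ε_z], or the same with the roles of the two faces exchanged; (2) for every p ∈ B with π_x(f_{α,β}(p)) ∈ I, one has |π_y(f_{α,β}(p))| < ε_y and |π_z(f_{α,β}(p))| < k·ε_z; (3) for every p ∈ B with π_x(f_{α,β}(p)) ∈ I, the derivative Df_{α,β}(p)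 maps every nonzero vector v with |v_y| ≤ ε_y|v_x| and |v_z| ≤ ε̂_z|v_x| to a vector w with w_x ≠ 0, |w_y| < ε_y|w_x| and |w_z| < ε̂_z|w_x|. Then for every C¹ graph curve γ(t) = (t, γ_y(t), γ_z(t)) over I satisfying, for all t ∈ I, |γ_y(t)−p_y(t)| ≤ ε_y, |γ_y'(t)−p_y'(t)| ≤ ε_y, |γ_z(t)−p_z(t)| ≤ ε_z, |γ_z'(t)−p_z'(t)| ≤ ε̂_z, there exists a C¹ function s : I → I with s(I) ⊆ (x0, x1) such that f∘γ∘s is a graph curve (t, w_y(t), w_z(t)) over I satisfying, for all t ∈ I, |w_y(t)−q_y(t)| < ε_y, |w_y'(t)−q_y'(t)| < ε_y, |w_z(t)−q_z(t)| < k·ε_z, |w_z'(t)−q_z'(t)| < ε̂_z. -/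
open Set

/-!
A graph curve in the source tube is straightened by `φ_α⁻¹` to a curve inside `B` whose tangents
lie in the horizontal cone. By (1) the `x`-coordinate of its image under `f_{α,β}` crosses
`[x0, x1]`; between the last visit to one end and the next visit to the other it covers exactly
`[x0, x1]`, and by (3) it has no critical point there. Hence it has a `C¹` inverse `s`, and the
image reparametrized by `s` is a graph whose position is controlled by (2) and whose slope, the
ratio of the components of the image tangent, is controlled by (3).
-/

open Function Metric OrderDual

section Crossing

variable {α β : Type*} [ConditionallyCompleteLinearOrder α] [TopologicalSpace α] [OrderTopology α]
  [DenselyOrdered α] [LinearOrder β] [TopologicalSpace β] [OrderClosedTopology β]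
  {g : α → β} {a b : α} {x y : β}

theorem exists_eq_forall_Ioc_lt (hab : a ≤ b) (hg : ContinuousOn g (Icc a b)) (ha : g a < y)
    (hb : y < g b) : ∃ c ∈ Ioo a b, g c = y ∧ ∀ t ∈ Ioc c b, y < g t := by
  obtain ⟨c, ⟨hc, hcy⟩, hmax⟩ : ∃ c, IsGreatest (Icc a b ∩ g ⁻¹' Iic y) c :=
    (isCompact_Icc.of_isClosed_subset (hg.preimage_isClosed_of_isClosed isClosed_Icc isClosed_Iic)
      inter_subset_left).exists_isGreatest ⟨a, left_mem_Icc.2 hab, ha.le⟩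
  have hgc : g c = y := by
    obtain ⟨d, hd, hgd⟩ := intermediate_value_Icc hc.2 (hg.mono (Icc_subset_Icc_left hc.1))
      ⟨hcy, hb.le⟩
    have hdc : d ≤ c := hmax ⟨⟨hc.1.trans hd.1, hd.2⟩, hgd.le⟩
    rwa [hdc.antisymm hd.1] at hgd
  refine ⟨c, ⟨hc.1.lt_of_ne ?_, hc.2.lt_of_ne ?_⟩, hgc, fun t ht => ?_⟩
  · rintro rfl
    exact ha.ne hgc
  · rintro rfl
    exact hb.ne' hgc
  · by_contra! hty
    exact ht.1.not_ge (hmax ⟨⟨hc.1.trans ht.1.le, ht.2⟩, hty⟩)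

theorem exists_eq_forall_Ico_lt (hab : a ≤ b) (hg : ContinuousOn g (Icc a b)) (ha : g a < y)
    (hb : y < g b) : ∃ c ∈ Ioo a b, g c = y ∧ ∀ t ∈ Ico a c, g t < y := by
  obtain ⟨c, hc, hgc, hlt⟩ := exists_eq_forall_Ioc_lt (g := toDual ∘ g ∘ ofDual)
    (a := toDual b) (b := toDual a) (y := toDual y) hab (by rwa [Icc_toDual]) hb ha
  exact ⟨c, hc.symm, hgc, fun t ht => hlt t ht.symm⟩

theorem exists_Icc_image_eq_of_lt (hab : a ≤ b) (hg : ContinuousOn g (Icc a b)) (hxy : x < y)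
    (ha : g a < x) (hb : y < g b) : ∃ c d, Icc c d ⊆ Ioo a b ∧ g '' Icc c d = Icc x y := by
  obtain ⟨c, hc, hgc, hcb⟩ := exists_eq_forall_Ioc_lt hab hg ha (hxy.trans hb)
  have hgcb : ContinuousOn g (Icc c b) := hg.mono (Icc_subset_Icc_left hc.1.le)
  obtain ⟨d, hd, hgd, hcd⟩ := exists_eq_forall_Ico_lt hc.2.le hgcb (hgc.trans_lt hxy) hb
  refine ⟨c, d, Icc_subset_Ioo hc.1 hd.2, Subset.antisymm ?_ ?_⟩
  · rintro _ ⟨t, ht, rfl⟩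
    constructor
    · rcases ht.1.eq_or_lt with rfl | hct
      · exact hgc.ge
      · exact (hcb t ⟨hct, ht.2.trans hd.2.le⟩).le
    · rcases ht.2.eq_or_lt with rfl | htd
      · exact hgd.le
      · exact (hcd t ⟨ht.1, htd⟩).le
  · simpa only [hgc, hgd] using
      intermediate_value_Icc hd.1.le (hgcb.mono (Icc_subset_Icc_right hd.2.le))

theorem exists_Icc_image_eq (hab : a ≤ b) (hg : ContinuousOn g (Icc a b)) (hxy : x < y)
    (h : (g a < x ∧ y < g b) ∨ (y < g a ∧ g b < x)) :
    ∃ c d, Icc c d ⊆ Ioo a b ∧ g '' Icc c d = Icc x y := by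
  rcases h with ⟨ha, hb⟩ | ⟨ha, hb⟩
  · exact exists_Icc_image_eq_of_lt hab hg hxy ha hb
  · obtain ⟨c, d, hcd, himage⟩ :=
      exists_Icc_image_eq_of_lt (g := toDual ∘ g) (x := toDual y) (y := toDual x) hab hg hxy ha hb
    exact ⟨c, d, hcd, himage.trans Icc_toDual⟩

end Crossing

section RightInverse

theorem continuousOn_of_rightInvOn {X Y : Type*} [TopologicalSpace X] [TopologicalSpace Y]
    [T2Space Y] {g : X → Y} {s : Y → X} {K : Set X} {J : Set Y} (hg : ContinuousOn g K)
    (hK : IsCompact K) (hinj : InjOn g K) (hs : MapsTo s J K) (hgs : RightInvOn s g J) :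
    ContinuousOn s J := by
  rw [continuousOn_iff_isClosed]
  intro C hC
  have hclosed : IsClosed (g '' (K ∩ C)) :=
    ((hK.inter_right hC).image_of_continuousOn (hg.mono inter_subset_left)).isClosed
  refine ⟨g '' (K ∩ C), hclosed, ?_⟩
  ext y
  constructor
  · rintro ⟨hyC, hyJ⟩
    exact ⟨⟨s y, ⟨hs hyJ, hyC⟩, hgs hyJ⟩, hyJ⟩
  · rintro ⟨⟨x, ⟨hxK, hxC⟩, rfl⟩, hyJ⟩
    refine ⟨?_, hyJ⟩
    rwa [mem_preimage, hinj (hs hyJ) hxK (hgs hyJ)]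

theorem injOn_of_forall_deriv_ne_zero {g : ℝ → ℝ} {K : Set ℝ} [hK : K.OrdConnected]
    (hg : ContinuousOn g K) (hne : ∀ t ∈ K, deriv g t ≠ 0) : InjOn g K := by
  intro u hu v hv huv
  by_contra! h
  wlog hlt : u < v generalizing u v
  · exact this hv hu huv.symm h.symm (h.lt_or_gt.resolve_left hlt)
  have hsub : Icc u v ⊆ K := hK.out hu hv
  obtain ⟨t, ht, hzero⟩ := exists_deriv_eq_zero hlt (hg.mono hsub) huv
  exact hne t (hsub (Ioo_subset_Icc_self ht)) hzero

theorem hasDerivWithinAt_of_rightInvOn {𝕜 : Type*} [NontriviallyNormedField 𝕜] {g s : 𝕜 → 𝕜}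
    {J : Set 𝕜} {g' t : 𝕜} (hs : ContinuousWithinAt s J t) (hgs : RightInvOn s g J) (ht : t ∈ J)
    (hg : HasDerivAt g g' (s t)) (hg' : g' ≠ 0) : HasDerivWithinAt s g'⁻¹ J t := by
  have := HasFDerivWithinAt.of_local_left_inverse (t := univ) (by simpa using hs.tendsto)
    (hg.hasFDerivAt_equiv hg').hasFDerivWithinAt ht
    (Filter.eventually_of_mem self_mem_nhdsWithin fun _ hu => hgs hu)
  simpa using this.hasDerivWithinAt

theorem contDiffOn_one_of_rightInvOn {𝕜 : Type*} [NontriviallyNormedField 𝕜] {g s : 𝕜 → 𝕜}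
    {U J : Set 𝕜} (hU : IsOpen U) (hJ : UniqueDiffOn 𝕜 J) (hg : ContDiffOn 𝕜 1 g U)
    (hs : ContinuousOn s J) (hsU : MapsTo s J U) (hgs : RightInvOn s g J)
    (hne : ∀ t ∈ J, deriv g (s t) ≠ 0) : ContDiffOn 𝕜 1 s J := by
  have hderiv : ∀ t ∈ J, HasDerivWithinAt s (deriv g (s t))⁻¹ J t := fun t ht =>
    hasDerivWithinAt_of_rightInvOn (hs t ht) hgs ht ((hg.differentiableOn one_ne_zero)
      |>.differentiableAt (hU.mem_nhds (hsU ht))).hasDerivAt (hne t ht)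
  have hcont : ContinuousOn (fun t => (deriv g (s t))⁻¹) J :=
    ((hg.continuousOn_deriv_of_isOpen hU le_rfl).comp hs hsU).inv₀ hne
  rw [contDiffOn_one_iff_derivWithin hJ]
  exact ⟨fun t ht => (hderiv t ht).differentiableWithinAt,
    hcont.congr fun t ht => (hderiv t ht).derivWithin (hJ t ht)⟩

theorem exists_contDiffOn_rightInvOn {g : ℝ → ℝ} {t₀ t₁ x₀ x₁ : ℝ} (ht : t₀ ≤ t₁) (hx : x₀ < x₁)
    (hg : ContDiffOn ℝ 1 g (Icc t₀ t₁))
    (hcross : (g t₀ < x₀ ∧ x₁ < g t₁) ∨ (x₁ < g t₀ ∧ g t₁ < x₀))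
    (hne : ∀ t ∈ Ioo t₀ t₁, g t ∈ Icc x₀ x₁ → deriv g t ≠ 0) :
    ∃ s : ℝ → ℝ, ContDiffOn ℝ 1 s (Icc x₀ x₁) ∧ MapsTo s (Icc x₀ x₁) (Ioo t₀ t₁) ∧
      RightInvOn s g (Icc x₀ x₁) := by
  obtain ⟨a, b, hab, himage⟩ := exists_Icc_image_eq ht hg.continuousOn hx hcross
  have hgo : ContDiffOn ℝ 1 g (Ioo t₀ t₁) := hg.mono Ioo_subset_Icc_self
  have hgc : ContinuousOn g (Icc a b) := hgo.continuousOn.mono hab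
  have hne' : ∀ t ∈ Icc a b, deriv g t ≠ 0 := fun t h =>
    hne t (hab h) (himage ▸ mem_image_of_mem g h)
  have hsurj : SurjOn g (Icc a b) (Icc x₀ x₁) := himage.ge
  have hmaps := hsurj.mapsTo_invFunOn
  have hright := hsurj.rightInvOn_invFunOn
  have hcont := continuousOn_of_rightInvOn hgc isCompact_Icc
    (injOn_of_forall_deriv_ne_zero hgc hne') hmaps hright
  exact ⟨invFunOn g (Icc a b), contDiffOn_one_of_rightInvOn isOpen_Ioo (uniqueDiffOn_Icc hx) hgo
    hcont (hmaps.mono_right hab) hright fun t h => hne' _ (hmaps h),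
    hmaps.mono_right hab, hright⟩

theorem exists_reparametrization_as_graph {W : Type*} [NormedAddCommGroup W] [NormedSpace ℝ W]
    {c : ℝ → ℝ × W} {t₀ t₁ x₀ x₁ : ℝ} (ht : t₀ ≤ t₁) (hx : x₀ < x₁)
    (hc : ContDiffOn ℝ 1 c (Icc t₀ t₁))
    (hcross : ((c t₀).1 < x₀ ∧ x₁ < (c t₁).1) ∨ (x₁ < (c t₀).1 ∧ (c t₁).1 < x₀))
    (hne : ∀ t ∈ Ioo t₀ t₁, (c t).1 ∈ Icc x₀ x₁ → (deriv c t).1 ≠ 0) :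
    ∃ s : ℝ → ℝ, ContDiffOn ℝ 1 s (Icc x₀ x₁) ∧ MapsTo s (Icc x₀ x₁) (Ioo t₀ t₁) ∧
      ∀ t ∈ Icc x₀ x₁, (c (s t)).1 = t ∧ HasDerivWithinAt (fun u => (c (s u)).2)
        ((deriv c (s t)).1⁻¹ • (deriv c (s t)).2) (Icc x₀ x₁) t := by
  have hderiv : ∀ t ∈ Ioo t₀ t₁, HasDerivAt c (deriv c t) t := fun t h =>
    ((hc.differentiableOn one_ne_zero).differentiableAt (Icc_mem_nhds h.1 h.2)).hasDerivAt
  have hfst : ∀ t ∈ Ioo t₀ t₁, HasDerivAt (fun u => (c u).1) (deriv c t).1 t := fun t h =>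
    (ContinuousLinearMap.fst ℝ ℝ W).hasFDerivAt.comp_hasDerivAt t (hderiv t h)
  have hsnd : ∀ t ∈ Ioo t₀ t₁, HasDerivAt (fun u => (c u).2) (deriv c t).2 t := fun t h =>
    (ContinuousLinearMap.snd ℝ ℝ W).hasFDerivAt.comp_hasDerivAt t (hderiv t h)
  obtain ⟨s, hs, hmaps, hright⟩ := exists_contDiffOn_rightInvOn ht hx hc.fst hcross
    fun t h hct => (hfst t h).deriv.symm ▸ hne t h hct
  refine ⟨s, hs, hmaps, fun t h => ?_⟩
  have hst : (c (s t)).1 = t := hright h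
  have hct : (c (s t)).1 ∈ Icc x₀ x₁ := by rwa [hst]
  refine ⟨hst, ?_⟩
  exact (hsnd _ (hmaps h)).scomp_hasDerivWithinAt t (hasDerivWithinAt_of_rightInvOn
    (hs.continuousOn t h) hright h (hfst _ (hmaps h)) (hne _ (hmaps h) hct))

end RightInverse

section Prod

variable {𝕜 E F : Type*} [NontriviallyNormedField 𝕜] [NormedAddCommGroup E] [NormedSpace 𝕜 E]
  [NormedAddCommGroup F] [NormedSpace 𝕜 F] {J : Set 𝕜} {t : 𝕜}

theorem deriv_prodMk {u : 𝕜 → E} {v : 𝕜 → F} (hu : DifferentiableAt 𝕜 u t)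
    (hv : DifferentiableAt 𝕜 v t) : deriv (fun τ => (u τ, v τ)) t = (deriv u t, deriv v t) :=
  (hu.hasDerivAt.prodMk hv.hasDerivAt).deriv

theorem derivWithin_fst {c : 𝕜 → E × F} {c' : E × F} (hc : HasDerivWithinAt c c' J t)
    (hJ : UniqueDiffWithinAt 𝕜 J t) : derivWithin (fun u => (c u).1) J t = c'.1 :=
  ((ContinuousLinearMap.fst 𝕜 E F).hasFDerivAt.comp_hasDerivWithinAt t hc).derivWithin hJ

theorem derivWithin_snd {c : 𝕜 → E × F} {c' : E × F} (hc : HasDerivWithinAt c c' J t)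
    (hJ : UniqueDiffWithinAt 𝕜 J t) : derivWithin (fun u => (c u).2) J t = c'.2 :=
  ((ContinuousLinearMap.snd 𝕜 E F).hasFDerivAt.comp_hasDerivWithinAt t hc).derivWithin hJ

end Prod

section Straighten

variable {V W : Type*} [AddGroup V] [AddGroup W]

/-- The map `f_{α,β} = φ_β⁻¹ ∘ f ∘ φ_α` for the graph curves `α t = (t, p t)` and
`β t = (t, q t)`: `f` in the coordinates that straighten both curves to the first axis. -/
def straighten (f : ℝ × V → ℝ × W) (p : ℝ → V) (q : ℝ → W) (v : ℝ × V) : ℝ × W :=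
  ((f (v.1, v.2 + p v.1)).1, (f (v.1, v.2 + p v.1)).2 - q (f (v.1, v.2 + p v.1)).1)

theorem straighten_sub (f : ℝ × V → ℝ × W) (p : ℝ → V) (q : ℝ → W) (t : ℝ) (v : V) :
    straighten f p q (t, v - p t) = ((f (t, v)).1, (f (t, v)).2 - q (f (t, v)).1) := by
  simp only [straighten, sub_add_cancel]

end Straighten

section ThroughBox

variable {V W : Type*} [NormedAddCommGroup V] [NormedSpace ℝ V] [NormedAddCommGroup W]
  [NormedSpace ℝ W] {x₀ x₁ t₀ t₁ : ℝ} {D S : Set V} {D' S' : Set W}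

/-- The paper's through box condition on `[t₀, t₁] × D` for the straightened map `F = f_{α,β}`,
with arbitrary sets in place of boxes and cones: over `[x₀, x₁]`, positions in `D` and slopes in
`S` are sent to positions in `D'` and slopes in `S'`. The slope of a vector `(a, w)` with `a ≠ 0`
is `a⁻¹ • w`. -/
structure IsThroughBox (F : ℝ × V → ℝ × W) (x₀ x₁ t₀ t₁ : ℝ) (D S : Set V) (D' S' : Set W) :
    Prop where
  crosses : (∀ v ∈ D, (F (t₀, v)).1 < x₀ ∧ x₁ < (F (t₁, v)).1) ∨
    (∀ v ∈ D, x₁ < (F (t₀, v)).1 ∧ (F (t₁, v)).1 < x₀)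
  snd_mem : ∀ t ∈ Icc t₀ t₁, ∀ v ∈ D, (F (t, v)).1 ∈ Icc x₀ x₁ → (F (t, v)).2 ∈ D'
  slope_mem : ∀ t ∈ Icc t₀ t₁, ∀ v ∈ D, (F (t, v)).1 ∈ Icc x₀ x₁ → ∀ m ∈ S,
    (fderiv ℝ F (t, v) (1, m)).1 ≠ 0 ∧
      (fderiv ℝ F (t, v) (1, m)).1⁻¹ • (fderiv ℝ F (t, v) (1, m)).2 ∈ S'

theorem deriv_comp_graph {F : ℝ × V → ℝ × W} {h : ℝ → V} {t : ℝ}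
    (hF : DifferentiableAt ℝ F (t, h t)) (hh : DifferentiableAt ℝ h t) :
    deriv (fun u => F (u, h u)) t = fderiv ℝ F (t, h t) (1, deriv h t) :=
  (hF.hasFDerivAt.comp_hasDerivAt t ((hasDerivAt_id t).prodMk hh.hasDerivAt)).deriv

theorem IsThroughBox.exists_graph {F : ℝ × V → ℝ × W}
    (hbox : IsThroughBox F x₀ x₁ t₀ t₁ D S D' S') (hx : x₀ < x₁) (ht : t₀ ≤ t₁)
    (hF : ContDiff ℝ 1 F) {h : ℝ → V} (hh : ContDiffOn ℝ 1 h (Icc t₀ t₁))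
    (hD : ∀ t ∈ Icc t₀ t₁, h t ∈ D) (hS : ∀ t ∈ Ioo t₀ t₁, deriv h t ∈ S) :
    ∃ s : ℝ → ℝ, ContDiffOn ℝ 1 s (Icc x₀ x₁) ∧ MapsTo s (Icc x₀ x₁) (Ioo t₀ t₁) ∧
      ∀ t ∈ Icc x₀ x₁, (F (s t, h (s t))).1 = t ∧ (F (s t, h (s t))).2 ∈ D' ∧
        ∃ m ∈ S', HasDerivWithinAt (fun u => (F (s u, h (s u))).2) m (Icc x₀ x₁) t := by
  have hcurve : ContDiffOn ℝ 1 (fun t => F (t, h t)) (Icc t₀ t₁) :=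
    hF.comp_contDiffOn (contDiffOn_id.prodMk hh)
  have hslope : ∀ t ∈ Ioo t₀ t₁, (F (t, h t)).1 ∈ Icc x₀ x₁ →
      (deriv (fun u => F (u, h u)) t).1 ≠ 0 ∧
        (deriv (fun u => F (u, h u)) t).1⁻¹ • (deriv (fun u => F (u, h u)) t).2 ∈ S' := by
    intro t htT hFt
    have htT' := Ioo_subset_Icc_self htT
    rw [deriv_comp_graph (hF.differentiable one_ne_zero _)
      ((hh.differentiableOn one_ne_zero).differentiableAt (Icc_mem_nhds htT.1 htT.2))]
    exact hbox.slope_mem t htT' (h t) (hD t htT') hFt (deriv h t) (hS t htT)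
  have hD₀ := hD t₀ (left_mem_Icc.2 ht)
  have hD₁ := hD t₁ (right_mem_Icc.2 ht)
  have hcross := hbox.crosses.imp (fun hc => And.intro (hc _ hD₀).1 (hc _ hD₁).2)
    (fun hc => And.intro (hc _ hD₀).1 (hc _ hD₁).2)
  obtain ⟨s, hs, hmaps, hgraph⟩ := exists_reparametrization_as_graph ht hx hcurve hcross
    fun t htT hFt => (hslope t htT hFt).1
  refine ⟨s, hs, hmaps, fun t htI => ?_⟩
  obtain ⟨hfst, hderiv⟩ := hgraph t htI
  have hst := Ioo_subset_Icc_self (hmaps htI)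
  have hFt : (F (s t, h (s t))).1 ∈ Icc x₀ x₁ := by rwa [hfst]
  exact ⟨hfst, hbox.snd_mem _ hst _ (hD _ hst) hFt, _, (hslope _ (hmaps htI) hFt).2, hderiv⟩

theorem contDiff_straighten {n : WithTop ℕ∞} {f : ℝ × V → ℝ × W} {p : ℝ → V} {q : ℝ → W}
    (hf : ContDiff ℝ n f) (hp : ContDiff ℝ n p) (hq : ContDiff ℝ n q) :
    ContDiff ℝ n (straighten f p q) := by
  unfold straighten
  fun_prop

theorem IsThroughBox.exists_graph_of_straighten {f : ℝ × V → ℝ × W} {p : ℝ → V} {q : ℝ → W}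
    (hbox : IsThroughBox (straighten f p q) x₀ x₁ t₀ t₁ D S D' S') (hx : x₀ < x₁) (ht : t₀ ≤ t₁)
    (hf : ContDiff ℝ 1 f) (hp : ContDiff ℝ 1 p) (hq : ContDiff ℝ 1 q) {γ : ℝ → V}
    (hγ : ContDiffOn ℝ 1 γ (Icc t₀ t₁)) (hD : ∀ t ∈ Icc t₀ t₁, γ t - p t ∈ D)
    (hS : ∀ t ∈ Ioo t₀ t₁, deriv γ t - deriv p t ∈ S) :
    ∃ s : ℝ → ℝ, ContDiffOn ℝ 1 s (Icc x₀ x₁) ∧ MapsTo s (Icc x₀ x₁) (Ioo t₀ t₁) ∧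
      ∀ t ∈ Icc x₀ x₁, (f (s t, γ (s t))).1 = t ∧ (f (s t, γ (s t))).2 - q t ∈ D' ∧
        ∃ m ∈ S', HasDerivWithinAt (fun u => (f (s u, γ (s u))).2) (m + deriv q t)
          (Icc x₀ x₁) t := by
  have hS' : ∀ t ∈ Ioo t₀ t₁, deriv (fun u => γ u - p u) t ∈ S := fun t htT => by
    rw [deriv_fun_sub ((hγ.differentiableOn one_ne_zero).differentiableAt
      (Icc_mem_nhds htT.1 htT.2)) (hp.differentiable one_ne_zero t)]
    exact hS t htT
  obtain ⟨s, hs, hmaps, hgraph⟩ := hbox.exists_graph hx ht (contDiff_straighten hf hp hq)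
    (hγ.sub hp.contDiffOn) hD hS'
  simp only [straighten_sub] at hgraph
  have hfst : ∀ t ∈ Icc x₀ x₁, (f (s t, γ (s t))).1 = t := fun t htI => (hgraph t htI).1
  refine ⟨s, hs, hmaps, fun t htI => ?_⟩
  obtain ⟨-, hmem, m, hm, hderiv⟩ := hgraph t htI
  rw [hfst t htI] at hmem
  refine ⟨hfst t htI, hmem, m, hm, ?_⟩
  refine (hderiv.add (hq.differentiable one_ne_zero t).hasDerivAt.hasDerivWithinAt).congr_of_mem
    (fun u hu => ?_) htI
  simp only [Pi.add_apply, hfst u hu, sub_add_cancel]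

end ThroughBox

section Cone

theorem norm_inv_smul_lt {𝕜 E : Type*} [NormedField 𝕜] [SeminormedAddCommGroup E]
    [NormedSpace 𝕜 E] {a : 𝕜} {r : ℝ} {w : E} (ha : a ≠ 0) (hw : ‖w‖ < r * ‖a‖) :
    ‖a⁻¹ • w‖ < r := by
  rwa [norm_smul, norm_inv, inv_mul_lt_iff₀' (norm_pos_iff.2 ha)]

variable {E F G H : Type*} [NormedAddCommGroup E] [NormedSpace ℝ E] [NormedAddCommGroup F]
  [NormedSpace ℝ F] [NormedAddCommGroup G] [NormedSpace ℝ G] [NormedAddCommGroup H]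
  [NormedSpace ℝ H]

theorem isThroughBox_of_cone {f : ℝ × E × F → ℝ × G × H}
    {x₀ x₁ t₀ t₁ εy εz σy σz δy δz τy τz : ℝ}
    (hcross : (∀ y ∈ closedBall (0 : E) εy, ∀ z ∈ closedBall (0 : F) εz,
        (f (t₀, y, z)).1 < x₀ ∧ x₁ < (f (t₁, y, z)).1) ∨
      (∀ y ∈ closedBall (0 : E) εy, ∀ z ∈ closedBall (0 : F) εz,
        x₁ < (f (t₀, y, z)).1 ∧ (f (t₁, y, z)).1 < x₀))
    (hpos : ∀ p ∈ Icc t₀ t₁ ×ˢ closedBall (0 : E) εy ×ˢ closedBall (0 : F) εz,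
      (f p).1 ∈ Icc x₀ x₁ → ‖(f p).2.1‖ < δy ∧ ‖(f p).2.2‖ < δz)
    (hcone : ∀ p ∈ Icc t₀ t₁ ×ˢ closedBall (0 : E) εy ×ˢ closedBall (0 : F) εz,
      (f p).1 ∈ Icc x₀ x₁ → ∀ v : ℝ × E × F, v ≠ 0 →
      ‖v.2.1‖ ≤ σy * |v.1| → ‖v.2.2‖ ≤ σz * |v.1| →
      ‖(fderiv ℝ f p v).2.1‖ < τy * |(fderiv ℝ f p v).1| ∧
      ‖(fderiv ℝ f p v).2.2‖ < τz * |(fderiv ℝ f p v).1|) :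
    IsThroughBox f x₀ x₁ t₀ t₁ (closedBall 0 εy ×ˢ closedBall 0 εz)
      (closedBall 0 σy ×ˢ closedBall 0 σz) (ball 0 δy ×ˢ ball 0 δz)
      (ball 0 τy ×ˢ ball 0 τz) where
  crosses := hcross.imp (fun h v hv => h _ hv.1 _ hv.2) (fun h v hv => h _ hv.1 _ hv.2)
  snd_mem t ht v hv hI :=
    (hpos (t, v) ⟨ht, hv⟩ hI).imp mem_ball_zero_iff.2 mem_ball_zero_iff.2
  slope_mem t ht v hv hI m hm := by
    obtain ⟨hy, hz⟩ := hcone (t, v) ⟨ht, hv⟩ hI (1, m) (fun h => one_ne_zero (congrArg Prod.fst h))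
      (by simpa using hm.1) (by simpa using hm.2)
    have ha : (fderiv ℝ f (t, v) (1, m)).1 ≠ 0 := fun h =>
      (norm_nonneg _).not_gt (by simpa only [h, abs_zero, mul_zero] using hy)
    exact ⟨ha, mem_ball_zero_iff.2 (norm_inv_smul_lt ha hy),
      mem_ball_zero_iff.2 (norm_inv_smul_lt ha hz)⟩

theorem stmt8_general {x₀ x₁ t₀ t₁ : ℝ} (hx : x₀ < x₁) (ht : t₀ ≤ t₁)
    (hTI : Icc t₀ t₁ ⊆ Icc x₀ x₁) {f : ℝ × E × F → ℝ × G × H} (hf : ContDiff ℝ 1 f)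
    {py : ℝ → E} {pz : ℝ → F} {qy : ℝ → G} {qz : ℝ → H} (hpy : ContDiff ℝ 1 py)
    (hpz : ContDiff ℝ 1 pz) (hqy : ContDiff ℝ 1 qy) (hqz : ContDiff ℝ 1 qz)
    {fab : ℝ × E × F → ℝ × G × H}
    (hfab : fab = straighten f (fun t => (py t, pz t)) (fun t => (qy t, qz t)))
    {εy εz σy σz δy δz τy τz : ℝ}
    (h1 : (∀ y ∈ closedBall (0 : E) εy, ∀ z ∈ closedBall (0 : F) εz,
        (fab (t₀, y, z)).1 < x₀ ∧ x₁ < (fab (t₁, y, z)).1) ∨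
      (∀ y ∈ closedBall (0 : E) εy, ∀ z ∈ closedBall (0 : F) εz,
        x₁ < (fab (t₀, y, z)).1 ∧ (fab (t₁, y, z)).1 < x₀))
    (h2 : ∀ p ∈ Icc t₀ t₁ ×ˢ closedBall (0 : E) εy ×ˢ closedBall (0 : F) εz,
      (fab p).1 ∈ Icc x₀ x₁ → ‖(fab p).2.1‖ < δy ∧ ‖(fab p).2.2‖ < δz)
    (h3 : ∀ p ∈ Icc t₀ t₁ ×ˢ closedBall (0 : E) εy ×ˢ closedBall (0 : F) εz,
      (fab p).1 ∈ Icc x₀ x₁ → ∀ v : ℝ × E × F, v ≠ 0 →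
      ‖v.2.1‖ ≤ σy * |v.1| → ‖v.2.2‖ ≤ σz * |v.1| →
      ‖(fderiv ℝ fab p v).2.1‖ < τy * |(fderiv ℝ fab p v).1| ∧
      ‖(fderiv ℝ fab p v).2.2‖ < τz * |(fderiv ℝ fab p v).1|)
    {γy : ℝ → E} {γz : ℝ → F}
    (hγy : ContDiffOn ℝ 1 γy (Icc x₀ x₁)) (hγz : ContDiffOn ℝ 1 γz (Icc x₀ x₁))
    (hy : ∀ t ∈ Icc x₀ x₁, ‖γy t - py t‖ ≤ εy)
    (hy' : ∀ t ∈ Icc x₀ x₁, ‖derivWithin γy (Icc x₀ x₁) t - deriv py t‖ ≤ σy)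
    (hz : ∀ t ∈ Icc x₀ x₁, ‖γz t - pz t‖ ≤ εz)
    (hz' : ∀ t ∈ Icc x₀ x₁, ‖derivWithin γz (Icc x₀ x₁) t - deriv pz t‖ ≤ σz) :
    ∃ s : ℝ → ℝ, ContDiffOn ℝ 1 s (Icc x₀ x₁) ∧
      (∀ t ∈ Icc x₀ x₁, s t ∈ Ioo x₀ x₁) ∧
      (∀ t ∈ Icc x₀ x₁, (f (s t, γy (s t), γz (s t))).1 = t) ∧
      (∀ t ∈ Icc x₀ x₁, ‖(f (s t, γy (s t), γz (s t))).2.1 - qy t‖ < δy) ∧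
      (∀ t ∈ Icc x₀ x₁,
        ‖derivWithin (fun u => (f (s u, γy (s u), γz (s u))).2.1) (Icc x₀ x₁) t
          - deriv qy t‖ < τy) ∧
      (∀ t ∈ Icc x₀ x₁, ‖(f (s t, γy (s t), γz (s t))).2.2 - qz t‖ < δz) ∧
      (∀ t ∈ Icc x₀ x₁,
        ‖derivWithin (fun u => (f (s u, γy (s u), γz (s u))).2.2) (Icc x₀ x₁) t
          - deriv qz t‖ < τz) := by
  subst hfab
  have hT : Ioo t₀ t₁ ⊆ Ioo x₀ x₁ :=
    Ioo_subset_Ioo (hTI (left_mem_Icc.2 ht)).1 (hTI (right_mem_Icc.2 ht)).2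
  have hslope : ∀ t ∈ Ioo t₀ t₁, deriv (fun u => (γy u, γz u)) t -
      deriv (fun u => (py u, pz u)) t ∈ closedBall (0 : E) σy ×ˢ closedBall (0 : F) σz := by
    intro t htT
    have hI : Icc x₀ x₁ ∈ nhds t := Icc_mem_nhds (hT htT).1 (hT htT).2
    have htI : t ∈ Icc x₀ x₁ := Ioo_subset_Icc_self (hT htT)
    rw [deriv_prodMk ((hγy.differentiableOn one_ne_zero).differentiableAt hI)
      ((hγz.differentiableOn one_ne_zero).differentiableAt hI),
      deriv_prodMk (hpy.differentiable one_ne_zero t) (hpz.differentiable one_ne_zero t),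
      ← derivWithin_of_mem_nhds hI, ← derivWithin_of_mem_nhds hI]
    exact ⟨mem_closedBall_zero_iff.2 (hy' t htI), mem_closedBall_zero_iff.2 (hz' t htI)⟩
  obtain ⟨s, hs, hmaps, hgraph⟩ := (isThroughBox_of_cone h1 h2 h3).exists_graph_of_straighten hx ht
    hf (hpy.prodMk hpz) (hqy.prodMk hqz) ((hγy.prodMk hγz).mono hTI)
    (fun t htT => ⟨mem_closedBall_zero_iff.2 (hy t (hTI htT)),
      mem_closedBall_zero_iff.2 (hz t (hTI htT))⟩) hslope
  have himage : ∀ t ∈ Icc x₀ x₁,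
      ‖derivWithin (fun u => (f (s u, γy (s u), γz (s u))).2.1) (Icc x₀ x₁) t
        - deriv qy t‖ < τy ∧
      ‖derivWithin (fun u => (f (s u, γy (s u), γz (s u))).2.2) (Icc x₀ x₁) t
        - deriv qz t‖ < τz := by
    intro t htI
    obtain ⟨-, -, m, ⟨hmy, hmz⟩, hderiv⟩ := hgraph t htI
    have hu := uniqueDiffOn_Icc hx t htI
    rw [deriv_prodMk (hqy.differentiable one_ne_zero t)
      (hqz.differentiable one_ne_zero t)] at hderiv
    rw [derivWithin_fst hderiv hu, derivWithin_snd hderiv hu, Prod.fst_add, Prod.snd_add,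
      add_sub_cancel_right, add_sub_cancel_right]
    exact ⟨mem_ball_zero_iff.1 hmy, mem_ball_zero_iff.1 hmz⟩
  exact ⟨s, hs, fun t h => hT (hmaps h), fun t h => (hgraph t h).1,
    fun t h => mem_ball_zero_iff.1 (hgraph t h).2.1.1, fun t h => (himage t h).1,
    fun t h => mem_ball_zero_iff.1 (hgraph t h).2.1.2, fun t h => (himage t h).2⟩

end Cone

theorem contDiff_of_forall_eq_eval {p : ℝ → ℝ} {n : WithTop ℕ∞}
    (hp : ∃ P : Polynomial ℝ, ∀ t : ℝ, p t = Polynomial.eval t P) : ContDiff ℝ n p := by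
  obtain ⟨P, hP⟩ := hp
  rw [funext hP]
  simpa only [Polynomial.coe_aeval_eq_eval] using P.contDiff_aeval (𝕜 := ℝ) n

theorem Icc_neg_eq_closedBall (r : ℝ) : Icc (-r) r = closedBall 0 r := by
  rw [Real.closedBall_eq_Icc, zero_sub, zero_add]

/-- The paper's Lemma 4.2: if `B = T × [−εy, εy] × [−εz, εz]` is a through box for the
polynomial graph curves `α(t) = (t, py t, pz t)` and `β(t) = (t, qy t, qz t)` (hypotheses
`h1`–`h3` on `f_{α,β} = φ_β⁻¹ ∘ f ∘ φ_α`), then the small u-tube around `α` maps through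
the big u-tube around `β` under `f`. -/
theorem stmt8 (x0 x1 t0 t1 : ℝ) (hx : x0 < x1) (ht : t0 ≤ t1)
    (hTI : Icc t0 t1 ⊆ Icc x0 x1)
    (f : ℝ × ℝ × ℝ → ℝ × ℝ × ℝ) (hf : ContDiff ℝ 1 f)
    (hfdiffeo : ∃ finv : ℝ × ℝ × ℝ → ℝ × ℝ × ℝ, ContDiff ℝ 1 finv ∧
      Function.LeftInverse finv f ∧ Function.RightInverse finv f)
    (py pz qy qz : ℝ → ℝ)
    (hpy : ∃ P : Polynomial ℝ, ∀ t : ℝ, py t = Polynomial.eval t P)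
    (hpz : ∃ P : Polynomial ℝ, ∀ t : ℝ, pz t = Polynomial.eval t P)
    (hqy : ∃ P : Polynomial ℝ, ∀ t : ℝ, qy t = Polynomial.eval t P)
    (hqz : ∃ P : Polynomial ℝ, ∀ t : ℝ, qz t = Polynomial.eval t P)
    (φα : ℝ × ℝ × ℝ → ℝ × ℝ × ℝ)
    (hφα : ∀ v : ℝ × ℝ × ℝ, φα v = (v.1, v.2.1 + py v.1, v.2.2 + pz v.1))
    (fab : ℝ × ℝ × ℝ → ℝ × ℝ × ℝ)
    (hfab : ∀ v : ℝ × ℝ × ℝ, fab v =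
      ((f (φα v)).1, (f (φα v)).2.1 - qy (f (φα v)).1,
        (f (φα v)).2.2 - qz (f (φα v)).1))
    (εy εz εz' : ℝ) (hεy : 0 < εy) (hεz : 0 < εz) (hεz' : 0 < εz')
    (k : ℕ) (hk : 1 < k)
    (B : Set (ℝ × ℝ × ℝ)) (hB : B = Icc t0 t1 ×ˢ Icc (-εy) εy ×ˢ Icc (-εz) εz)
    (h1 : (∀ y ∈ Icc (-εy) εy, ∀ z ∈ Icc (-εz) εz,
        (fab (t0, y, z)).1 < x0 ∧ x1 < (fab (t1, y, z)).1) ∨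
      (∀ y ∈ Icc (-εy) εy, ∀ z ∈ Icc (-εz) εz,
        x1 < (fab (t0, y, z)).1 ∧ (fab (t1, y, z)).1 < x0))
    (h2 : ∀ p ∈ B, (fab p).1 ∈ Icc x0 x1 →
      |(fab p).2.1| < εy ∧ |(fab p).2.2| < (k : ℝ) * εz)
    (h3 : ∀ p ∈ B, (fab p).1 ∈ Icc x0 x1 → ∀ v : ℝ × ℝ × ℝ, v ≠ 0 →
      |v.2.1| ≤ εy * |v.1| → |v.2.2| ≤ εz' * |v.1| →
      (fderiv ℝ fab p v).1 ≠ 0 ∧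
      |(fderiv ℝ fab p v).2.1| < εy * |(fderiv ℝ fab p v).1| ∧
      |(fderiv ℝ fab p v).2.2| < εz' * |(fderiv ℝ fab p v).1|) :
    ∀ γy γz : ℝ → ℝ,
      ContDiffOn ℝ 1 γy (Icc x0 x1) → ContDiffOn ℝ 1 γz (Icc x0 x1) →
      (∀ t ∈ Icc x0 x1, |γy t - py t| ≤ εy) →
      (∀ t ∈ Icc x0 x1, |derivWithin γy (Icc x0 x1) t - deriv py t| ≤ εy) →
      (∀ t ∈ Icc x0 x1, |γz t - pz t| ≤ εz) →
      (∀ t ∈ Icc x0 x1, |derivWithin γz (Icc x0 x1) t - deriv pz t| ≤ εz') →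
      ∃ s : ℝ → ℝ, ContDiffOn ℝ 1 s (Icc x0 x1) ∧
        (∀ t ∈ Icc x0 x1, s t ∈ Ioo x0 x1) ∧
        (∀ t ∈ Icc x0 x1, (f (s t, γy (s t), γz (s t))).1 = t) ∧
        (∀ t ∈ Icc x0 x1, |(f (s t, γy (s t), γz (s t))).2.1 - qy t| < εy) ∧
        (∀ t ∈ Icc x0 x1,
          |derivWithin (fun u => (f (s u, γy (s u), γz (s u))).2.1) (Icc x0 x1) t
            - deriv qy t| < εy) ∧
        (∀ t ∈ Icc x0 x1, |(f (s t, γy (s t), γz (s t))).2.2 - qz t| < (k : ℝ) * εz) ∧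
        (∀ t ∈ Icc x0 x1,
          |derivWithin (fun u => (f (s u, γy (s u), γz (s u))).2.2) (Icc x0 x1) t
            - deriv qz t| < εz') := by
  intro γy γz hγy hγz hy hy' hz hz'
  simp only [hB, Icc_neg_eq_closedBall] at h1 h2 h3
  exact stmt8_general hx ht hTI hf (contDiff_of_forall_eq_eval hpy) (contDiff_of_forall_eq_eval hpz)
    (contDiff_of_forall_eq_eval hqy) (contDiff_of_forall_eq_eval hqz)
    (funext fun v => by rw [hfab, hφα]; rfl) h1 h2
    (fun p hp hI v hv hvy hvz => (h3 p hp hI v hv hvy hvz).2) hγy hγz hy hy' hz hz'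
end

section
/- Let t0 < t1 and x0 ≤ x1 be real numbers and let ψ : [t0, t1] → ℝ be C¹. Suppose that either (ψ(t0) < x0 and ψ(t1) > x1) or (ψ(t0) > x1 and ψ(t1) < x0), and suppose ψ'(t) ≠ 0 for every t ∈ [t0, t1] with ψ(t) ∈ [x0, x1]. Then there exists a C¹, strictly monotone function s : [x0, x1] → (t0, t1) such that ψ(s(x)) = x for all x ∈ [x0, x1]. -/
open Set

/-!
Suppose `ψ` crosses `[x0, x1]` upwards; the other case follows by passing to `-ψ`. Let `a` be the
last time at which `ψ = x0`, and `b` the first time after `a` at which `ψ = x1`. Then `ψ` maps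
`[a, b]` onto `[x0, x1]` without leaving `[x0, x1]`, so its derivative does not vanish on `[a, b]`
and `ψ` is strictly increasing there by Rolle's theorem. The inverse of `ψ` on `[a, b]` is
continuous by compactness, hence agrees locally with the inverses provided by the inverse function
theorem, which are as smooth as `ψ`.
-/

section Crossing

variable {α β : Type*} [ConditionallyCompleteLinearOrder α] [TopologicalSpace α] [OrderTopology α]
  [DenselyOrdered α] [LinearOrder β] [TopologicalSpace β] [OrderClosedTopology β]
  {f : α → β} {a b : α} {y z : β}

theorem exists_eq_and_forall_Icc_right_ge (hab : a ≤ b) (hf : ContinuousOn f (Icc a b))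
    (ha : f a ≤ y) (hb : y ≤ f b) : ∃ c ∈ Icc a b, f c = y ∧ ∀ t ∈ Icc c b, y ≤ f t := by
  have hcompact : IsCompact (Icc a b ∩ f ⁻¹' Iic y) :=
    isCompact_Icc.of_isClosed_subset (hf.preimage_isClosed_of_isClosed isClosed_Icc isClosed_Iic)
      inter_subset_left
  obtain ⟨c, ⟨hc, hcy⟩, hmax⟩ := hcompact.exists_isGreatest ⟨a, left_mem_Icc.2 hab, ha⟩
  have eq_of_le : ∀ t ∈ Icc c b, f t ≤ y → t = c := fun t ht hty ↦
    (hmax ⟨⟨hc.1.trans ht.1, ht.2⟩, hty⟩).antisymm ht.1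
  obtain ⟨u, hu, rfl⟩ :=
    intermediate_value_Icc hc.2 (hf.mono (Icc_subset_Icc_left hc.1)) ⟨hcy, hb⟩
  obtain rfl := eq_of_le u hu le_rfl
  refine ⟨u, hc, rfl, fun t ht ↦ le_of_not_gt fun hlt ↦ hlt.ne ?_⟩
  rw [eq_of_le t ht hlt.le]

theorem exists_eq_and_forall_Icc_left_le (hab : a ≤ b) (hf : ContinuousOn f (Icc a b))
    (ha : f a ≤ y) (hb : y ≤ f b) : ∃ c ∈ Icc a b, f c = y ∧ ∀ t ∈ Icc a c, f t ≤ y := by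
  obtain ⟨c, hc, hcy, hle⟩ := exists_eq_and_forall_Icc_right_ge (α := αᵒᵈ) (β := βᵒᵈ)
    (f := OrderDual.toDual ∘ f ∘ OrderDual.ofDual) (a := OrderDual.toDual b)
    (b := OrderDual.toDual a) (y := OrderDual.toDual y) hab (by rwa [Icc_toDual]) hb ha
  exact ⟨c, hc.symm, hcy, fun t ht ↦ hle t ht.symm⟩

theorem exists_Icc_subset_mapsTo_Icc (hab : a ≤ b) (hyz : y ≤ z) (hf : ContinuousOn f (Icc a b))
    (ha : f a ≤ y) (hb : z ≤ f b) :
    ∃ c d, c ≤ d ∧ Icc c d ⊆ Icc a b ∧ f c = y ∧ f d = z ∧ MapsTo f (Icc c d) (Icc y z) := by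
  obtain ⟨c, hc, hcy, hge⟩ := exists_eq_and_forall_Icc_right_ge hab hf ha (hyz.trans hb)
  obtain ⟨d, hd, hdz, hle⟩ := exists_eq_and_forall_Icc_left_le hc.2
    (hf.mono (Icc_subset_Icc_left hc.1)) (hcy.trans_le hyz) hb
  exact ⟨c, d, hd.1, Icc_subset_Icc hc.1 hd.2, hcy, hdz,
    fun t ht ↦ ⟨hge t ⟨ht.1, ht.2.trans hd.2⟩, hle t ht⟩⟩

end Crossing

theorem continuousOn_of_invOn_of_isCompact {X Y : Type*} [TopologicalSpace X] [TopologicalSpace Y]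
    [T2Space Y] {f : X → Y} {g : Y → X} {K : Set X} {S : Set Y} (hK : IsCompact K)
    (hf : ContinuousOn f K) (hgf : InvOn g f K S) (hg : MapsTo g S K) : ContinuousOn g S := by
  refine continuousOn_iff_isClosed.2 fun C hC ↦ ⟨f '' (K ∩ C), ?_, ?_⟩
  · exact ((hK.inter_right hC).image_of_continuousOn (hf.mono inter_subset_left)).isClosed
  · ext y
    constructor
    · rintro ⟨hyC, hyS⟩
      exact ⟨⟨g y, ⟨hg hyS, hyC⟩, hgf.2 hyS⟩, hyS⟩
    · rintro ⟨⟨x, ⟨hxK, hxC⟩, rfl⟩, hyS⟩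
      exact ⟨by rwa [mem_preimage, hgf.1 hxK], hyS⟩

theorem contDiffWithinAt_of_leftInvOn {𝕜 E F : Type*} [RCLike 𝕜] [NormedAddCommGroup E]
    [NormedSpace 𝕜 E] [CompleteSpace E] [NormedAddCommGroup F] [NormedSpace 𝕜 F] {f : E → F}
    {f' : E ≃L[𝕜] F} {g : F → E} {S : Set F} {y : F} {n : WithTop ℕ∞} (hn : n ≠ 0)
    (hg : ContinuousWithinAt g S y) (hfg : LeftInvOn f g S) (hy : y ∈ S)
    (hf : ContDiffAt 𝕜 n f (g y)) (hf' : HasFDerivAt f (f' : E →L[𝕜] F) (g y)) :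
    ContDiffWithinAt 𝕜 n g S y := by
  have hinv : ContDiffAt 𝕜 n (hf.localInverse hf' hn) y := by
    simpa only [hfg hy] using hf.to_localInverse hf' hn
  refine hinv.contDiffWithinAt.congr_of_eventuallyEq_of_mem ?_ hy
  filter_upwards [hg.eventually (hf.hasStrictFDerivAt' hf' hn).eventually_left_inverse,
    self_mem_nhdsWithin] with z hz hzS
  rw [hfg hzS] at hz
  exact hz.symm

theorem injOn_of_deriv_ne_zero {f : ℝ → ℝ} {S : Set ℝ} (hS : S.OrdConnected)
    (hf : ContinuousOn f S) (hd : ∀ t ∈ interior S, deriv f t ≠ 0) : InjOn f S := by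
  intro u hu v hv huv
  by_contra hne
  wlog hlt : u < v generalizing u v
  · exact this hv hu huv.symm (Ne.symm hne) (lt_of_le_of_ne (not_lt.1 hlt) (Ne.symm hne))
  obtain ⟨c, hc, hc0⟩ := exists_deriv_eq_zero hlt (hf.mono (hS.out hu hv)) huv
  exact hd c (interior_mono (hS.out hu hv) (by rwa [interior_Icc])) hc0

theorem exists_contDiffOn_strictMonoOn_invOn_Icc {n : WithTop ℕ∞} (hn : n ≠ 0) {f : ℝ → ℝ}
    {a b : ℝ} (hab : a ≤ b) (hfab : f a ≤ f b) (hf : ∀ t ∈ Icc a b, ContDiffAt ℝ n f t)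
    (hd : ∀ t ∈ Icc a b, deriv f t ≠ 0) :
    ∃ s : ℝ → ℝ, ContDiffOn ℝ n s (Icc (f a) (f b)) ∧ StrictMonoOn s (Icc (f a) (f b)) ∧
      MapsTo s (Icc (f a) (f b)) (Icc a b) ∧ InvOn s f (Icc a b) (Icc (f a) (f b)) := by
  have hcont : ContinuousOn f (Icc a b) := fun t ht ↦ (hf t ht).continuousAt.continuousWithinAt
  have hinj : InjOn f (Icc a b) :=
    injOn_of_deriv_ne_zero ordConnected_Icc hcont fun t ht ↦ hd t (interior_subset ht)
  have hmono : StrictMonoOn f (Icc a b) := hcont.strictMonoOn_of_injOn_Icc hab hfab hinj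
  have hsurj : SurjOn f (Icc a b) (Icc (f a) (f b)) := intermediate_value_Icc hab hcont
  have hbij : BijOn f (Icc a b) (Icc (f a) (f b)) := ⟨hmono.monotoneOn.mapsTo_Icc, hinj, hsurj⟩
  have hinv := hbij.invOn_invFunOn
  have hmaps := hsurj.mapsTo_invFunOn
  have hscont := continuousOn_of_invOn_of_isCompact isCompact_Icc hcont hinv hmaps
  refine ⟨_, fun x hx ↦ ?_, ?_, hmaps, hinv⟩
  · have hfderiv := ((hf _ (hmaps hx)).differentiableAt hn).hasDerivAt.hasFDerivAt_equiv
      (hd _ (hmaps hx))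
    exact contDiffWithinAt_of_leftInvOn hn (hscont x hx) hinv.2 hx (hf _ (hmaps hx)) hfderiv
  · exact (Function.monotoneOn_of_rightInvOn_of_mapsTo hmono.monotoneOn hinv.2
      hmaps).strictMonoOn_of_injOn (LeftInvOn.injOn hinv.2)

theorem exists_contDiffOn_strictMonoOn_leftInvOn {n : WithTop ℕ∞} (hn : n ≠ 0)
    {t0 t1 x0 x1 : ℝ} (ht : t0 ≤ t1) (hx : x0 ≤ x1) {ψ : ℝ → ℝ}
    (hcont : ContinuousOn ψ (Icc t0 t1)) (h0 : ψ t0 < x0) (h1 : x1 < ψ t1)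
    (hψ : ∀ t ∈ Icc t0 t1, ψ t ∈ Icc x0 x1 → ContDiffWithinAt ℝ n ψ (Icc t0 t1) t)
    (hd : ∀ t ∈ Icc t0 t1, ψ t ∈ Icc x0 x1 → derivWithin ψ (Icc t0 t1) t ≠ 0) :
    ∃ s : ℝ → ℝ, ContDiffOn ℝ n s (Icc x0 x1) ∧ StrictMonoOn s (Icc x0 x1) ∧
      MapsTo s (Icc x0 x1) (Ioo t0 t1) ∧ LeftInvOn ψ s (Icc x0 x1) := by
  obtain ⟨a, b, hab, hsub, rfl, rfl, hmaps⟩ :=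
    exists_Icc_subset_mapsTo_Icc ht hx hcont h0.le h1.le
  have hsub_Ioo : Icc a b ⊆ Ioo t0 t1 := fun t h ↦
    ⟨(hsub h).1.lt_of_ne (by rintro rfl; exact (hmaps h).1.not_gt h0),
      (hsub h).2.lt_of_ne (by rintro rfl; exact (hmaps h).2.not_gt h1)⟩
  have hnhds : ∀ t ∈ Icc a b, Icc t0 t1 ∈ nhds t := fun t h ↦
    Icc_mem_nhds (hsub_Ioo h).1 (hsub_Ioo h).2
  obtain ⟨s, hs, hmono, hsmaps, hinv⟩ := exists_contDiffOn_strictMonoOn_invOn_Icc hn hab hx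
    (fun t h ↦ (hψ t (hsub h) (hmaps h)).contDiffAt (hnhds t h)) fun t h ↦ by
      rw [← derivWithin_of_mem_nhds (hnhds t h)]
      exact hd t (hsub h) (hmaps h)
  exact ⟨s, hs, hmono, hsmaps.mono_right hsub_Ioo, hinv.2⟩

theorem stmt9_general {n : WithTop ℕ∞} (hn : n ≠ 0) {t0 t1 x0 x1 : ℝ} (ht : t0 ≤ t1)
    (hx : x0 ≤ x1) {ψ : ℝ → ℝ} (hcont : ContinuousOn ψ (Icc t0 t1))
    (hend : (ψ t0 < x0 ∧ x1 < ψ t1) ∨ (x1 < ψ t0 ∧ ψ t1 < x0))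
    (hψ : ∀ t ∈ Icc t0 t1, ψ t ∈ Icc x0 x1 → ContDiffWithinAt ℝ n ψ (Icc t0 t1) t)
    (hd : ∀ t ∈ Icc t0 t1, ψ t ∈ Icc x0 x1 → derivWithin ψ (Icc t0 t1) t ≠ 0) :
    ∃ s : ℝ → ℝ, ContDiffOn ℝ n s (Icc x0 x1) ∧
      (StrictMonoOn s (Icc x0 x1) ∨ StrictAntiOn s (Icc x0 x1)) ∧
      (∀ x ∈ Icc x0 x1, s x ∈ Ioo t0 t1) ∧
      (∀ x ∈ Icc x0 x1, ψ (s x) = x) := by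
  rcases hend with ⟨h0, h1⟩ | ⟨h0, h1⟩
  · obtain ⟨s, hs, hmono, hmaps, hinv⟩ :=
      exists_contDiffOn_strictMonoOn_leftInvOn hn ht hx hcont h0 h1 hψ hd
    exact ⟨s, hs, Or.inl hmono, hmaps, hinv⟩
  · have hneg : MapsTo Neg.neg (Icc x0 x1) (Icc (-x1) (-x0)) := fun x h ↦
      ⟨neg_le_neg h.2, neg_le_neg h.1⟩
    have hmem : ∀ t, -ψ t ∈ Icc (-x1) (-x0) → ψ t ∈ Icc x0 x1 := fun t h ↦
      ⟨neg_le_neg_iff.1 h.2, neg_le_neg_iff.1 h.1⟩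
    have hd_neg : ∀ t ∈ Icc t0 t1, -ψ t ∈ Icc (-x1) (-x0) →
        derivWithin (fun u ↦ -ψ u) (Icc t0 t1) t ≠ 0 := fun t h h' ↦ by
      rw [derivWithin.fun_neg]
      exact neg_ne_zero.2 (hd t h (hmem t h'))
    obtain ⟨s, hs, hmono, hmaps, hinv⟩ := exists_contDiffOn_strictMonoOn_leftInvOn hn ht
      (neg_le_neg hx) hcont.neg (neg_lt_neg h0) (neg_lt_neg h1)
      (fun t h h' ↦ (hψ t h (hmem t h')).neg) hd_neg
    refine ⟨s ∘ Neg.neg, hs.comp contDiff_neg.contDiffOn hneg, Or.inr ?_, hmaps.comp hneg,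
      fun x h ↦ neg_injective (hinv (hneg h))⟩
    exact fun x hx y hy hxy ↦ hmono (hneg hy) (hneg hx) (neg_lt_neg hxy)

/-- The one-dimensional section lemma: a `C¹` function on `[t0, t1]` whose endpoint values
lie on opposite sides of the target interval `[x0, x1]`, and whose derivative does not vanish
on the preimage of `[x0, x1]`, admits a `C¹`, strictly monotone inverse branch defined on all
of `[x0, x1]` with values in `(t0, t1)`. -/
theorem stmt9 (t0 t1 x0 x1 : ℝ) (ht : t0 < t1) (hx : x0 ≤ x1)
    (ψ : ℝ → ℝ) (hψ : ContDiffOn ℝ 1 ψ (Icc t0 t1))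
    (hend : (ψ t0 < x0 ∧ x1 < ψ t1) ∨ (x1 < ψ t0 ∧ ψ t1 < x0))
    (hd : ∀ t ∈ Icc t0 t1, ψ t ∈ Icc x0 x1 → derivWithin ψ (Icc t0 t1) t ≠ 0) :
    ∃ s : ℝ → ℝ, ContDiffOn ℝ 1 s (Icc x0 x1) ∧
      (StrictMonoOn s (Icc x0 x1) ∨ StrictAntiOn s (Icc x0 x1)) ∧
      (∀ x ∈ Icc x0 x1, s x ∈ Ioo t0 t1) ∧
      (∀ x ∈ Icc x0 x1, ψ (s x) = x) :=
  stmt9_general one_ne_zero ht.le hx hψ.continuousOn hend (fun t h _ ↦ hψ t h) hd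
end
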